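/- arXiv:1806.04553 — 3 statements merged into one kernel-verified Lean document; each statement's English description precedes it below -/
import Mathlib

section
/- For positive semidefinite operators ρ and σ with the support of ρ contained in the support of σ, and for α > 1 with β = α − 1, the Araki–Lieb–Thirring inequality implies that the Petz Rényi power tr(ρ^α σ^{−β}) is at least the sandwiched Rényi power tr((σ^{−β/(2α)} ρ σ^{−β/(2α)})^α). -/
open scoped Matrix BigOperators Classical ComplexOrder

noncomputable section

/-- Real part of the trace of a complex matrix. -/
def rtr {d : ℕ} (M : Matrix (Fin d) (Fin d) ℂ) : ℝ := (Matrix.trace M).re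

/-- Functional calculus applied to a matrix (junk value `0` if the matrix is not Hermitian). -/
def mfun {d : ℕ} (f : ℝ → ℝ) (A : Matrix (Fin d) (Fin d) ℂ) : Matrix (Fin d) (Fin d) ℂ :=
  if h : A.IsHermitian then h.cfc f else 0

/-- Positive part `[A]₊` of a Hermitian matrix. -/
def posPartM {d : ℕ} (A : Matrix (Fin d) (Fin d) ℂ) : Matrix (Fin d) (Fin d) ℂ :=
  mfun (fun x => max x 0) A

/-- Projector onto the support of the positive part of a Hermitian matrix. -/
def posSuppProj {d : ℕ} (A : Matrix (Fin d) (Fin d) ℂ) : Matrix (Fin d) (Fin d) ℂ :=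
  mfun (fun x => if 0 < x then 1 else 0) A

/-- Operator absolute value of a Hermitian matrix. -/
def absM {d : ℕ} (A : Matrix (Fin d) (Fin d) ℂ) : Matrix (Fin d) (Fin d) ℂ :=
  mfun (fun x => |x|) A

/-- Moore–Penrose (relative) power of a Hermitian matrix: `x ↦ x ^ p` on the support,
`0` on the kernel. -/
def mpow {d : ℕ} (A : Matrix (Fin d) (Fin d) ℂ) (p : ℝ) : Matrix (Fin d) (Fin d) ℂ :=
  mfun (fun x => if x = 0 then 0 else x ^ p) A

/-- Support containment: the kernel of `σ` is contained in the kernel of `ρ`,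
i.e. `supp ρ ⊆ supp σ` for positive semidefinite matrices. -/
def suppSubset {d : ℕ} (ρ σ : Matrix (Fin d) (Fin d) ℂ) : Prop :=
  ∀ v : Fin d → ℂ, σ.mulVec v = 0 → ρ.mulVec v = 0

/-- Sandwiched Rényi power `R_α(ρ|σ) = tr((σ^{-β/(2α)} ρ σ^{-β/(2α)})^α)`, `β = α - 1`. -/
def sandR {d : ℕ} (α : ℝ) (ρ σ : Matrix (Fin d) (Fin d) ℂ) : ℝ :=
  rtr (mpow (mpow σ (-(α - 1) / (2 * α)) * ρ * mpow σ (-(α - 1) / (2 * α))) α)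

/-- Petz Rényi power `tr(ρ^α σ^{-β})`, `β = α - 1`. -/
def petzR {d : ℕ} (α : ℝ) (ρ σ : Matrix (Fin d) (Fin d) ℂ) : ℝ :=
  rtr (mpow ρ α * mpow σ (-(α - 1)))


/-!
Write `‖·‖` for the Frobenius norm, `X = B A B`, `P = tr (B ^ r A ^ r B ^ r)` and `T = tr (X ^ r)`.
The Araki–Lieb–Thirring inequality `T ≤ P` for `r ≥ 1` comes from the three-lines theorem applied to
`F z = A ^ (r (1 - z) / 2) B ^ (r (1 - z)) X ^ (r z / 2)`. Imaginary powers are contractions, so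
`‖F z‖` is at most `‖A ^ (r / 2) B ^ r‖ = √P` on `Re z = 0` and at most `‖X ^ (r / 2)‖ = √T` on
`Re z = 1`. At `z = 1 - 1 / r` the first two factors are `A ^ (1 / 2) B`, whose Gram matrix is `X`,
so `‖F z‖ = √T` again. Hence `T ≤ P ^ (1 / r) T ^ (1 - 1 / r)`, that is, `T ≤ P`.

The comparison of the Rényi powers is the case `A = ρ`, `B = σ ^ (-β / (2α))`, `r = α`.
-/

section ArakiLiebThirring

open Complex.HadamardThreeLines
open scoped MatrixOrder Matrix.Norms.Frobenius

theorem rpow_mul_rpow_of_exponent_nonneg {R : Type*} [PartialOrder R] [Ring R] [StarRing R]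
    [TopologicalSpace R] [StarOrderedRing R] [Algebra ℝ R]
    [ContinuousFunctionalCalculus ℝ R IsSelfAdjoint] [NonnegSpectrumClass ℝ R]
    (a : R) {p q : ℝ} (hp : 0 ≤ p) (hq : 0 ≤ q) : a ^ p * a ^ q = a ^ (p + q) := by
  simp only [CFC.rpow_def]
  rw [← cfc_mul _ _ a]
  simp only [NNReal.rpow_add_of_nonneg _ hp hq]

variable {m n 𝕜 : Type*} [Fintype m] [Fintype n] [RCLike 𝕜]

theorem frobenius_norm_sq_eq_re_trace (M : Matrix m n 𝕜) :
    ‖M‖ ^ 2 = RCLike.re (Mᴴ * M).trace := by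
  rw [Matrix.frobenius_norm_def, ← Real.sqrt_eq_rpow, Real.sq_sqrt (by positivity),
    Finset.sum_comm]
  simp only [Real.rpow_ofNat, Matrix.trace, Matrix.diag, Matrix.mul_apply,
    Matrix.conjTranspose_apply, RCLike.star_def, RCLike.conj_mul, map_sum, ← RCLike.ofReal_pow,
    RCLike.ofReal_re]

theorem frobenius_norm_mul_le_of_conjTranspose_mul_self_le {M N : Matrix n n 𝕜}
    (h : Mᴴ * M ≤ Nᴴ * N) (B : Matrix n m 𝕜) : ‖M * B‖ ≤ ‖N * B‖ := by
  have hdiff : 0 ≤ RCLike.re (Bᴴ * (Nᴴ * N - Mᴴ * M) * B).trace :=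
    (RCLike.nonneg_iff.mp ((Matrix.le_iff.mp h).conjTranspose_mul_mul_same B).trace_nonneg).1
  refine (sq_le_sq₀ (norm_nonneg _) (norm_nonneg _)).mp ?_
  rw [← sub_nonneg]
  simpa only [frobenius_norm_sq_eq_re_trace, Matrix.conjTranspose_mul, Matrix.mul_sub,
    Matrix.sub_mul, Matrix.trace_sub, map_sub, Matrix.mul_assoc] using hdiff

theorem posSemidef_mul_mul_self {A B : Matrix n n 𝕜} (hA : A.PosSemidef) (hB : B.IsHermitian) :
    (B * A * B).PosSemidef := by
  simpa only [hB.eq] using hA.conjTranspose_mul_mul_same B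

variable [DecidableEq n]

/-- The functional calculus `f ↦ f(A)` of a Hermitian matrix for complex-valued functions of the
real spectrum. `Matrix.IsHermitian.cfc` covers real-valued `f` only, and imaginary powers are
needed here. -/
def spectralCalculus {A : Matrix n n ℂ} (hA : A.IsHermitian) :
    (ℝ → ℂ) →⋆ₐ[ℂ] Matrix n n ℂ where
  toFun f := Unitary.conjStarAlgAut ℂ _ hA.eigenvectorUnitary
    (Matrix.diagonal (f ∘ hA.eigenvalues))
  map_zero' := by simp [Pi.zero_def, Function.comp_def]
  map_one' := by simp [Pi.one_def, Function.comp_def]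
  map_mul' f g := by rw [← map_mul, Matrix.diagonal_mul_diagonal]; rfl
  map_add' f g := by rw [← map_add, Matrix.diagonal_add]; rfl
  commutes' c := by
    rw [← AlgHomClass.commutes (Unitary.conjStarAlgAut ℂ _ hA.eigenvectorUnitary) c,
      Matrix.algebraMap_eq_diagonal]
    rfl
  map_star' f := by
    rw [← map_star, Matrix.star_eq_conjTranspose, Matrix.diagonal_conjTranspose]; rfl

section SpectralCalculus

variable {A : Matrix n n ℂ} (hA : A.IsHermitian)

theorem spectralCalculus_apply (f : ℝ → ℂ) :
    spectralCalculus hA f = Unitary.conjStarAlgAut ℂ _ hA.eigenvectorUnitary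
      (Matrix.diagonal (f ∘ hA.eigenvalues)) := rfl

theorem spectralCalculus_ofReal (f : ℝ → ℝ) :
    spectralCalculus hA (fun x ↦ (f x : ℂ)) = cfc f A :=
  (hA.cfc_eq f).symm

theorem spectralCalculus_congr {f g : ℝ → ℂ}
    (h : ∀ i, f (hA.eigenvalues i) = g (hA.eigenvalues i)) :
    spectralCalculus hA f = spectralCalculus hA g := by
  simp only [spectralCalculus_apply, Function.comp_def, h]

theorem spectralCalculus_nonneg {f : ℝ → ℂ} (h : ∀ i, 0 ≤ f (hA.eigenvalues i)) :
    0 ≤ spectralCalculus hA f :=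
  map_nonneg (Unitary.conjStarAlgAut ℂ _ hA.eigenvectorUnitary)
    (Matrix.PosSemidef.diagonal h).nonneg

theorem conjTranspose_spectralCalculus_mul_self (f : ℝ → ℂ) :
    (spectralCalculus hA f)ᴴ * spectralCalculus hA f =
      spectralCalculus hA (fun x ↦ ((‖f x‖ ^ 2 : ℝ) : ℂ)) := by
  rw [← Matrix.star_eq_conjTranspose, ← map_star, ← map_mul]
  congr 1
  ext x
  simp [Complex.conj_mul']

theorem norm_spectralCalculus_mul_le {f g : ℝ → ℂ}
    (h : ∀ i, ‖f (hA.eigenvalues i)‖ ≤ ‖g (hA.eigenvalues i)‖) (M : Matrix n m ℂ) :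
    ‖spectralCalculus hA f * M‖ ≤ ‖spectralCalculus hA g * M‖ := by
  refine frobenius_norm_mul_le_of_conjTranspose_mul_self_le ?_ M
  rw [← sub_nonneg, conjTranspose_spectralCalculus_mul_self,
    conjTranspose_spectralCalculus_mul_self, ← map_sub]
  refine spectralCalculus_nonneg hA fun i ↦ ?_
  rw [Pi.sub_apply, ← Complex.ofReal_sub, Complex.zero_le_real, sub_nonneg]
  gcongr
  exact h i

theorem norm_mul_spectralCalculus_le {f g : ℝ → ℂ}
    (h : ∀ i, ‖f (hA.eigenvalues i)‖ ≤ ‖g (hA.eigenvalues i)‖) (M : Matrix m n ℂ) :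
    ‖M * spectralCalculus hA f‖ ≤ ‖M * spectralCalculus hA g‖ := by
  rw [← Matrix.frobenius_norm_conjTranspose, ← Matrix.frobenius_norm_conjTranspose (M * _),
    Matrix.conjTranspose_mul, Matrix.conjTranspose_mul, ← Matrix.star_eq_conjTranspose,
    ← Matrix.star_eq_conjTranspose (spectralCalculus hA g), ← map_star, ← map_star]
  exact norm_spectralCalculus_mul_le hA (by simpa using h) Mᴴ

theorem differentiable_spectralCalculus {f : ℂ → ℝ → ℂ}
    (hf : ∀ x, Differentiable ℂ fun z ↦ f z x) :
    Differentiable ℂ fun z ↦ spectralCalculus hA (f z) := by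
  let evalDiag : (n → ℂ) →L[ℂ] Matrix n n ℂ :=
    ((Unitary.conjStarAlgAut ℂ _ hA.eigenvectorUnitary).toAlgEquiv.toLinearMap ∘ₗ
      Matrix.diagonalLinearMap n ℂ ℂ).toContinuousLinearMap
  exact evalDiag.differentiable.comp (differentiable_pi.mpr fun i ↦ hf (hA.eigenvalues i))

end SpectralCalculus

/-- The complex power `x ^ z`, set to `0` at `x = 0`. Unlike `Complex.cpow` this also vanishes at
`x = z = 0`, so that it is entire in `z` for every `x`. -/
def suppCpow (z : ℂ) (x : ℝ) : ℂ := if x = 0 then 0 else (x : ℂ) ^ z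

theorem differentiable_suppCpow (x : ℝ) : Differentiable ℂ fun z ↦ suppCpow z x := by
  by_cases hx : x = 0
  · simp [suppCpow, hx]
  · simp only [suppCpow, if_neg hx]
    exact differentiable_id.const_cpow (.inl (by exact_mod_cast hx))

theorem suppCpow_ofReal {p x : ℝ} (hp : p ≠ 0) (hx : 0 ≤ x) :
    suppCpow p x = ((x ^ p : ℝ) : ℂ) := by
  rcases eq_or_ne x 0 with rfl | hx0
  · simp [suppCpow, Real.zero_rpow hp]
  · rw [suppCpow, if_neg hx0, Complex.ofReal_cpow hx]

theorem norm_suppCpow (z : ℂ) {x : ℝ} (hx : 0 ≤ x) :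
    ‖suppCpow z x‖ = if x = 0 then 0 else x ^ z.re := by
  rw [suppCpow]
  split_ifs with hx0
  · exact norm_zero
  · exact Complex.norm_cpow_eq_rpow_re_of_pos (hx.lt_of_ne' hx0) z

theorem norm_suppCpow_le_one {z : ℂ} (hz : z.re = 0) {x : ℝ} (hx : 0 ≤ x) : ‖suppCpow z x‖ ≤ 1 := by
  rw [norm_suppCpow z hx, hz, Real.rpow_zero]
  split_ifs <;> norm_num

/-- The complex power `A ^ z` of a positive semidefinite matrix, taken on the support of `A` and
extended by zero to its kernel. -/
def matCpow {A : Matrix n n ℂ} (hA : A.PosSemidef) (z : ℂ) : Matrix n n ℂ :=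
  spectralCalculus hA.isHermitian (suppCpow z)

section ComplexPower

variable {A : Matrix n n ℂ} (hA : A.PosSemidef)

theorem matCpow_ofReal {p : ℝ} (hp : p ≠ 0) : matCpow hA p = A ^ p := by
  rw [CFC.rpow_eq_cfc_real hA.nonneg, ← spectralCalculus_ofReal hA.isHermitian]
  exact spectralCalculus_congr _ fun i ↦ suppCpow_ofReal hp (hA.eigenvalues_nonneg i)

theorem matCpow_one : matCpow hA 1 = A := by
  rw [← Complex.ofReal_one, matCpow_ofReal hA one_ne_zero, CFC.rpow_one A hA.nonneg]

theorem differentiable_matCpow : Differentiable ℂ (matCpow hA) :=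
  differentiable_spectralCalculus hA.isHermitian differentiable_suppCpow

variable {z w : ℂ}

theorem norm_matCpow_mul_le_of_re_eq (h : z.re = w.re) (M : Matrix n m ℂ) :
    ‖matCpow hA z * M‖ ≤ ‖matCpow hA w * M‖ := by
  refine norm_spectralCalculus_mul_le _ (fun i ↦ ?_) M
  rw [norm_suppCpow z (hA.eigenvalues_nonneg i), norm_suppCpow w (hA.eigenvalues_nonneg i), h]

theorem norm_mul_matCpow_le_of_re_eq (h : z.re = w.re) (M : Matrix m n ℂ) :
    ‖M * matCpow hA z‖ ≤ ‖M * matCpow hA w‖ := by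
  refine norm_mul_spectralCalculus_le _ (fun i ↦ ?_) M
  rw [norm_suppCpow z (hA.eigenvalues_nonneg i), norm_suppCpow w (hA.eigenvalues_nonneg i), h]

theorem norm_matCpow_le_of_re_eq (h : z.re = w.re) : ‖matCpow hA z‖ ≤ ‖matCpow hA w‖ := by
  simpa using norm_matCpow_mul_le_of_re_eq hA h (1 : Matrix n n ℂ)

theorem norm_matCpow_mul_le_of_re_eq_zero (hz : z.re = 0) (M : Matrix n m ℂ) :
    ‖matCpow hA z * M‖ ≤ ‖M‖ := by
  simpa [matCpow] using norm_spectralCalculus_mul_le hA.isHermitian (g := 1)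
    (fun i ↦ by simpa using norm_suppCpow_le_one hz (hA.eigenvalues_nonneg i)) M

theorem norm_mul_matCpow_le_of_re_eq_zero (hz : z.re = 0) (M : Matrix m n ℂ) :
    ‖M * matCpow hA z‖ ≤ ‖M‖ := by
  simpa [matCpow] using norm_mul_spectralCalculus_le hA.isHermitian (g := 1)
    (fun i ↦ by simpa using norm_suppCpow_le_one hz (hA.eigenvalues_nonneg i)) M

end ComplexPower

section Interpolation

variable {A B C : Matrix n n ℂ} (hA : A.PosSemidef) (hB : B.PosSemidef) (hC : C.PosSemidef)

/-- The entire matrix-valued family `A ^ (1 - z) * B ^ (1 - z) * C ^ z` to which the three-lines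
theorem is applied. -/
def interpolant (z : ℂ) : Matrix n n ℂ :=
  matCpow hA (1 - z) * matCpow hB (1 - z) * matCpow hC z

theorem differentiable_interpolant : Differentiable ℂ (interpolant hA hB hC) := by
  have h₁ {D : Matrix n n ℂ} (hD : D.PosSemidef) : Differentiable ℂ fun z ↦ matCpow hD (1 - z) :=
    (differentiable_matCpow hD).comp (differentiable_id.const_sub 1)
  exact ((h₁ hA).mul (h₁ hB)).mul (differentiable_matCpow hC)

theorem norm_interpolant_le (z : ℂ) :
    ‖interpolant hA hB hC z‖ ≤
      ‖matCpow hA (1 - z.re)‖ * ‖matCpow hB (1 - z.re)‖ * ‖matCpow hC z.re‖ := by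
  have hre : (1 - z).re = (1 - z.re : ℂ).re := by simp
  calc ‖matCpow hA (1 - z) * matCpow hB (1 - z) * matCpow hC z‖
      ≤ ‖matCpow hA (1 - z)‖ * ‖matCpow hB (1 - z)‖ * ‖matCpow hC z‖ := norm_mul₃_le
    _ ≤ ‖matCpow hA (1 - z.re)‖ * ‖matCpow hB (1 - z.re)‖ * ‖matCpow hC z.re‖ :=
        mul_le_mul (mul_le_mul (norm_matCpow_le_of_re_eq hA hre) (norm_matCpow_le_of_re_eq hB hre)
          (norm_nonneg _) (norm_nonneg _)) (norm_matCpow_le_of_re_eq hC (Complex.ofReal_re _).symm)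
          (norm_nonneg _) (by positivity)

theorem bddAbove_norm_interpolant :
    BddAbove ((norm ∘ interpolant hA hB hC) '' verticalClosedStrip 0 1) := by
  let bound (t : ℝ) : ℝ :=
    ‖matCpow hA (1 - t)‖ * ‖matCpow hB (1 - t)‖ * ‖matCpow hC t‖
  have hcont {D : Matrix n n ℂ} (hD : D.PosSemidef) {f : ℝ → ℂ} (hf : Continuous f) :
      Continuous fun t ↦ ‖matCpow hD (f t)‖ :=
    ((differentiable_matCpow hD).continuous.comp hf).norm
  have hbound : Continuous bound :=
    ((hcont hA (by fun_prop)).mul (hcont hB (by fun_prop))).mul (hcont hC (by fun_prop))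
  obtain ⟨K, hK⟩ := (isCompact_Icc (a := 0) (b := 1)).bddAbove_image hbound.continuousOn
  refine ⟨K, ?_⟩
  rintro _ ⟨z, hz, rfl⟩
  exact (norm_interpolant_le hA hB hC z).trans (hK (Set.mem_image_of_mem bound hz))

theorem norm_interpolant_le_of_re_eq_zero {z : ℂ} (hz : z.re = 0) :
    ‖interpolant hA hB hC z‖ ≤ ‖A * B‖ := by
  have hre : (1 - z).re = (1 : ℂ).re := by simp [hz]
  calc ‖matCpow hA (1 - z) * matCpow hB (1 - z) * matCpow hC z‖
      ≤ ‖matCpow hA (1 - z) * matCpow hB (1 - z)‖ := norm_mul_matCpow_le_of_re_eq_zero hC hz _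
    _ ≤ ‖matCpow hA 1 * matCpow hB (1 - z)‖ := norm_matCpow_mul_le_of_re_eq hA hre _
    _ ≤ ‖matCpow hA 1 * matCpow hB 1‖ := norm_mul_matCpow_le_of_re_eq hB hre _
    _ = ‖A * B‖ := by rw [matCpow_one, matCpow_one]

theorem norm_interpolant_le_of_re_eq_one {z : ℂ} (hz : z.re = 1) :
    ‖interpolant hA hB hC z‖ ≤ ‖C‖ := by
  have hre : (1 - z).re = 0 := by simp [hz]
  calc ‖matCpow hA (1 - z) * matCpow hB (1 - z) * matCpow hC z‖
      = ‖matCpow hA (1 - z) * (matCpow hB (1 - z) * matCpow hC z)‖ := by rw [mul_assoc]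
    _ ≤ ‖matCpow hB (1 - z) * matCpow hC z‖ := norm_matCpow_mul_le_of_re_eq_zero hA hre _
    _ ≤ ‖matCpow hC z‖ := norm_matCpow_mul_le_of_re_eq_zero hB hre _
    _ ≤ ‖matCpow hC 1‖ := norm_matCpow_le_of_re_eq hC hz
    _ = ‖C‖ := by rw [matCpow_one]

end Interpolation

theorem norm_rpow_mul_rpow_mul_rpow_le {A B C : Matrix n n ℂ} (hA : A.PosSemidef)
    (hB : B.PosSemidef) (hC : C.PosSemidef) {θ : ℝ} (hθ₀ : 0 ≤ θ) (hθ₁ : θ ≤ 1) :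
    ‖A ^ (1 - θ) * B ^ (1 - θ) * C ^ θ‖ ≤ ‖A * B‖ ^ (1 - θ) * ‖C‖ ^ θ := by
  -- The endpoints are separate: `matCpow _ 0` is the support projection, but `A ^ (0 : ℝ) = 1`.
  rcases hθ₀.eq_or_lt with rfl | hθ₀'
  · simp [CFC.rpow_one A hA.nonneg, CFC.rpow_one B hB.nonneg, CFC.rpow_zero C hC.nonneg]
  rcases hθ₁.eq_or_lt with rfl | hθ₁'
  · simp [CFC.rpow_zero A hA.nonneg, CFC.rpow_zero B hB.nonneg, CFC.rpow_one C hC.nonneg]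
  have hvalue : interpolant hA hB hC θ = A ^ (1 - θ) * B ^ (1 - θ) * C ^ θ := by
    rw [interpolant, ← Complex.ofReal_one, ← Complex.ofReal_sub,
      matCpow_ofReal hA (sub_pos.mpr hθ₁').ne', matCpow_ofReal hB (sub_pos.mpr hθ₁').ne',
      matCpow_ofReal hC hθ₀'.ne']
  rw [← hvalue]
  exact norm_le_interp_of_mem_verticalClosedStrip₀₁' _ (z := (θ : ℂ)) ⟨hθ₀, hθ₁⟩
    (differentiable_interpolant hA hB hC).diffContOnCl (bddAbove_norm_interpolant hA hB hC)
    (fun _ ↦ norm_interpolant_le_of_re_eq_zero hA hB hC)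
    (fun _ ↦ norm_interpolant_le_of_re_eq_one hA hB hC)

theorem le_of_le_rpow_mul_rpow_one_sub {a b θ : ℝ} (hb : 0 ≤ b) (hθ : 0 < θ)
    (h : a ≤ b ^ θ * a ^ (1 - θ)) : a ≤ b := by
  by_contra! hba
  have ha : 0 < a := hb.trans_lt hba
  refine h.not_gt ?_
  calc b ^ θ * a ^ (1 - θ) < a ^ θ * a ^ (1 - θ) := by gcongr
    _ = a := by rw [← Real.rpow_add ha, add_sub_cancel, Real.rpow_one]

theorem posSemidef_rpow (A : Matrix n n 𝕜) (p : ℝ) : (A ^ p).PosSemidef :=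
  Matrix.nonneg_iff_posSemidef.mp CFC.rpow_nonneg

theorem frobenius_norm_rpow_half_mul_sq (A : Matrix n n 𝕜) {p : ℝ} (hp : 0 ≤ p)
    (M : Matrix n m 𝕜) : ‖A ^ (p / 2) * M‖ ^ 2 = RCLike.re (Mᴴ * A ^ p * M).trace := by
  have hmul : A ^ (p / 2) * A ^ (p / 2) = A ^ p := by
    rw [rpow_mul_rpow_of_exponent_nonneg A (by positivity) (by positivity), add_halves]
  rw [frobenius_norm_sq_eq_re_trace, Matrix.conjTranspose_mul,
    (posSemidef_rpow A (p / 2)).isHermitian.eq, Matrix.mul_assoc Mᴴ,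
    ← Matrix.mul_assoc (A ^ (p / 2)), hmul, ← Matrix.mul_assoc]

theorem frobenius_norm_rpow_half_sq (A : Matrix n n 𝕜) {p : ℝ} (hp : 0 ≤ p) :
    ‖A ^ (p / 2)‖ ^ 2 = RCLike.re (A ^ p).trace := by
  simpa only [Matrix.mul_one, Matrix.conjTranspose_one, Matrix.one_mul] using
    frobenius_norm_rpow_half_mul_sq A hp (1 : Matrix n n 𝕜)

theorem rpow_mul_self_mul_rpow {X : Matrix n n 𝕜} (hX : X.PosSemidef) {s : ℝ} (hs : 0 ≤ s) :
    X ^ s * X * X ^ s = X ^ (2 * s + 1) :=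
  calc X ^ s * X * X ^ s = X ^ s * X ^ (1 : ℝ) * X ^ s :=
        congrArg (X ^ s * · * X ^ s) (CFC.rpow_one X hX.nonneg).symm
    _ = X ^ (2 * s + 1) := by
        rw [rpow_mul_rpow_of_exponent_nonneg X hs zero_le_one,
          rpow_mul_rpow_of_exponent_nonneg X (by positivity) hs, add_right_comm, ← two_mul]

theorem frobenius_norm_sqrt_mul_mul_rpow {A B : Matrix n n 𝕜} (hA : A.PosSemidef)
    (hB : B.IsHermitian) {s : ℝ} (hs : 0 ≤ s) :
    ‖A ^ (1 / 2 : ℝ) * B * (B * A * B) ^ s‖ = ‖(B * A * B) ^ (s + 1 / 2)‖ := by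
  refine (sq_eq_sq₀ (norm_nonneg _) (norm_nonneg _)).mp ?_
  calc ‖A ^ (1 / 2 : ℝ) * B * (B * A * B) ^ s‖ ^ 2
      = RCLike.re ((B * A * B) ^ s * (B * A * B) * (B * A * B) ^ s).trace := by
        rw [mul_assoc, frobenius_norm_rpow_half_mul_sq A zero_le_one, CFC.rpow_one A hA.nonneg,
          Matrix.conjTranspose_mul, (posSemidef_rpow _ s).isHermitian.eq, hB.eq]
        simp only [mul_assoc]
    _ = RCLike.re ((B * A * B) ^ (2 * s + 1)).trace := by
        rw [rpow_mul_self_mul_rpow (posSemidef_mul_mul_self hA hB) hs]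
    _ = ‖(B * A * B) ^ (s + 1 / 2)‖ ^ 2 := by
        rw [← frobenius_norm_rpow_half_sq _ (by positivity), add_div,
          mul_div_cancel_left₀ s two_ne_zero]

theorem araki_lieb_thirring {A B : Matrix n n ℂ} (hA : A.PosSemidef) (hB : B.PosSemidef)
    {r : ℝ} (hr : 1 ≤ r) :
    ((B * A * B) ^ r).trace.re ≤ (B ^ r * A ^ r * B ^ r).trace.re := by
  have hr₀ : 0 < r := one_pos.trans_le hr
  have hθ₀ : 0 ≤ 1 - r⁻¹ := sub_nonneg.mpr (inv_le_one_of_one_le₀ hr)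
  have hθ₁ : 1 - r⁻¹ ≤ 1 := sub_le_self 1 (by positivity)
  have hX : (B * A * B).PosSemidef := posSemidef_mul_mul_self hA hB.isHermitian
  have hinterp : ‖(B * A * B) ^ (r / 2)‖ ≤
      ‖A ^ (r / 2) * B ^ r‖ ^ r⁻¹ * ‖(B * A * B) ^ (r / 2)‖ ^ (1 - r⁻¹) := by
    have h := norm_rpow_mul_rpow_mul_rpow_le (posSemidef_rpow A (r / 2))
      (posSemidef_rpow B r) (posSemidef_rpow (B * A * B) (r / 2)) hθ₀ hθ₁
    rwa [sub_sub_cancel,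
      CFC.rpow_rpow_of_exponent_nonneg A _ _ (by positivity) (by positivity) hA.nonneg,
      CFC.rpow_rpow_of_exponent_nonneg B _ _ (by positivity) (by positivity) hB.nonneg,
      CFC.rpow_rpow_of_exponent_nonneg _ _ _ (by positivity) hθ₀ hX.nonneg,
      show r / 2 * r⁻¹ = 1 / 2 by field_simp, mul_inv_cancel₀ hr₀.ne', CFC.rpow_one B hB.nonneg,
      frobenius_norm_sqrt_mul_mul_rpow hA hB.isHermitian (by positivity),
      show r / 2 * (1 - r⁻¹) + 1 / 2 = r / 2 by field_simp; ring] at h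
  have hnorm : ‖(B * A * B) ^ (r / 2)‖ ≤ ‖A ^ (r / 2) * B ^ r‖ :=
    le_of_le_rpow_mul_rpow_one_sub (norm_nonneg _) (inv_pos.mpr hr₀) hinterp
  calc ((B * A * B) ^ r).trace.re
      = ‖(B * A * B) ^ (r / 2)‖ ^ 2 := by
        rw [frobenius_norm_rpow_half_sq _ hr₀.le, RCLike.re_eq_complex_re]
    _ ≤ ‖A ^ (r / 2) * B ^ r‖ ^ 2 := by gcongr
    _ = (B ^ r * A ^ r * B ^ r).trace.re := by
        rw [frobenius_norm_rpow_half_mul_sq A hr₀.le, (posSemidef_rpow B r).isHermitian.eq,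
          RCLike.re_eq_complex_re]

end ArakiLiebThirring

section MoorePenrosePower

open scoped MatrixOrder

variable {d : ℕ} {A : Matrix (Fin d) (Fin d) ℂ}

theorem mpow_eq_cfc (hA : A.IsHermitian) (p : ℝ) :
    mpow A p = cfc (fun x : ℝ ↦ if x = 0 then 0 else x ^ p) A := by
  rw [mpow, mfun, dif_pos hA, hA.cfc_eq]

theorem mpow_eq_rpow (hA : A.PosSemidef) {p : ℝ} (hp : p ≠ 0) : mpow A p = A ^ p := by
  rw [mpow_eq_cfc hA.isHermitian, CFC.rpow_eq_cfc_real hA.nonneg]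
  congr 1
  ext x
  split_ifs with hx
  · rw [hx, Real.zero_rpow hp]
  · rfl

theorem posSemidef_mpow (hA : A.PosSemidef) (p : ℝ) : (mpow A p).PosSemidef := by
  rw [mpow_eq_cfc hA.isHermitian]
  refine Matrix.nonneg_iff_posSemidef.mp (cfc_nonneg fun x hx ↦ ?_)
  have hx₀ : 0 ≤ x := spectrum_nonneg_of_nonneg hA.nonneg hx
  positivity

theorem mpow_mul_mpow (hA : A.PosSemidef) (p q : ℝ) : mpow A p * mpow A q = mpow A (p + q) := by
  have hcont (f : ℝ → ℝ) : ContinuousOn f (spectrum ℝ A) := A.finite_real_spectrum.continuousOn f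
  simp only [mpow_eq_cfc hA.isHermitian]
  rw [← cfc_mul _ _ A (hcont _) (hcont _)]
  refine cfc_congr fun x hx ↦ ?_
  have hx₀ : 0 ≤ x := spectrum_nonneg_of_nonneg hA.nonneg hx
  rcases hx₀.eq_or_lt' with rfl | hxpos
  · simp
  · simp [hxpos.ne', Real.rpow_add hxpos]

theorem mpow_mpow (hA : A.PosSemidef) (p q : ℝ) : mpow (mpow A p) q = mpow A (p * q) := by
  rw [mpow_eq_cfc (posSemidef_mpow hA p).isHermitian, mpow_eq_cfc hA.isHermitian,
    mpow_eq_cfc hA.isHermitian, ← cfc_comp' _ _ A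
      ((A.finite_real_spectrum.image _).continuousOn _) (A.finite_real_spectrum.continuousOn _)]
  refine cfc_congr fun x hx ↦ ?_
  have hx₀ : 0 ≤ x := spectrum_nonneg_of_nonneg hA.nonneg hx
  rcases hx₀.eq_or_lt' with rfl | hxpos
  · simp
  · simp [hxpos.ne', (Real.rpow_pos_of_pos hxpos p).ne', Real.rpow_mul hx₀]

end MoorePenrosePower

theorem stmt5_general {d : ℕ} (ρ σ : Matrix (Fin d) (Fin d) ℂ)
    (hρ : ρ.PosSemidef) (hσ : σ.PosSemidef) (α : ℝ) (hα : 1 ≤ α) :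
    sandR α ρ σ ≤ petzR α ρ σ := by
  have hα₀ : α ≠ 0 := (one_pos.trans_le hα).ne'
  set B := mpow σ (-(α - 1) / (2 * α)) with hB_def
  have hB : B.PosSemidef := posSemidef_mpow hσ _
  have hBρB : (B * ρ * B).PosSemidef := posSemidef_mul_mul_self hρ hB.isHermitian
  have hBα : mpow B α * mpow B α = mpow σ (-(α - 1)) := by
    rw [hB_def, mpow_mpow hσ, mpow_mul_mpow hσ]
    congr 1
    field_simp
    ring
  calc sandR α ρ σ
      = (mpow (B * ρ * B) α).trace.re := rfl
    _ ≤ (mpow B α * mpow ρ α * mpow B α).trace.re := by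
        rw [mpow_eq_rpow hBρB hα₀, mpow_eq_rpow hB hα₀, mpow_eq_rpow hρ hα₀]
        exact araki_lieb_thirring hρ hB hα
    _ = (mpow ρ α * (mpow B α * mpow B α)).trace.re := by
        rw [Matrix.trace_mul_cycle', Matrix.mul_assoc]
    _ = petzR α ρ σ := by rw [hBα]; rfl

/-- Araki–Lieb–Thirring consequence: the Petz Rényi power dominates the sandwiched
Rényi power for `α > 1`. -/
theorem stmt5 {d : ℕ} (ρ σ : Matrix (Fin d) (Fin d) ℂ)
    (hρ : ρ.PosSemidef) (hσ : σ.PosSemidef) (hsupp : suppSubset ρ σ)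
    (α : ℝ) (hα : 1 < α) :
    sandR α ρ σ ≤ petzR α ρ σ :=
  stmt5_general ρ σ hρ hσ α hα.le
end
end

section
/- Let 0 ≤ ρ ≪ σ be positive semidefinite operators (support of ρ contained in support of σ), p ≥ 0, and α > 1 with β = α − 1. Then p^β · tr([ρ − pσ]_+) ≤ p^β · tr(ρ · Π) ≤ tr((σ^{−β/(2α)} ρ σ^{−β/(2α)})^α), where Π is the projector onto the support of the positive part of ρ − pσ. -/
open scoped Matrix BigOperators Classical ComplexOrder

noncomputable section

/-!
Let `K` be a matrix and write Hermitian `A`, `B` in eigenbases `e_i`, `f_j` with eigenvalues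
`a_i`, `b_j`. Then `tr(K* f(A) K g(B))` is the sum of `f(a_i) g(b_j) |⟨e_i, K f_j⟩|²`, so a scalar
inequality `f(x) g(y) ≤ u(x) + v(y)` integrates against nonnegative weights to a trace inequality.
Young's inequality with conjugate exponents `α`, `q` yields in this way

* `c tr(AB) ≤ tr(A^α) / α + c^q tr(B^q) / q` for `A, B ≥ 0`, and
* `tr((K* A K)^q) ≤ tr(K* A^q K)` for `A ≥ 0` and contractions `K`, hence
  `tr((σ^(1/2q) Π σ^(1/2q))^q) ≤ tr(σ Π)`.

Take `A` to be the sandwiched state, `B = σ^(1/2q) Π σ^(1/2q)` and `c = p^β`, for which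
`c^q = p^β p`: this gives `p^β tr(ρ Π) ≤ R_α / α + p^β p tr(σ Π) / q`. Since
`p tr(σ Π) ≤ tr(ρ Π)`, the last term is absorbed by the left-hand side.
-/

section

open Matrix
open scoped MatrixOrder

variable {n m 𝕜 : Type*} [Fintype n] [RCLike 𝕜]

theorem re_trace_nonneg {A : Matrix n n 𝕜} (hA : 0 ≤ A) : 0 ≤ RCLike.re A.trace :=
  (RCLike.nonneg_iff.1 hA.posSemidef.trace_nonneg).1

theorem mul_eq_zero_of_ker_le {k l R : Type*} [NonUnitalNonAssocSemiring R] {A : Matrix k n R}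
    {B : Matrix l n R} (hker : ∀ v, B *ᵥ v = 0 → A *ᵥ v = 0) {C : Matrix n m R}
    (hBC : B * C = 0) : A * C = 0 := by
  ext i j
  exact congrFun (hker (C.col j) (funext fun k => congrFun₂ hBC k j)) i

theorem re_trace_mul_nonneg {A B : Matrix n n 𝕜} (hA : 0 ≤ A) (hB : 0 ≤ B) :
    0 ≤ RCLike.re (A * B).trace := by
  have hsqrt : (CFC.sqrt B)ᴴ = CFC.sqrt B := (CFC.sqrt_nonneg B).posSemidef.isHermitian
  have hconj : (A * B).trace = (CFC.sqrt B * A * (CFC.sqrt B)ᴴ).trace := by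
    rw [trace_mul_cycle, hsqrt, CFC.sqrt_mul_sqrt_self B hB, trace_mul_comm]
  rw [hconj]
  exact re_trace_nonneg (hA.posSemidef.mul_mul_conjTranspose_same _).nonneg

theorem re_trace_mul_le {A B C : Matrix n n 𝕜} (hAB : A ≤ B) (hC : 0 ≤ C) :
    RCLike.re (A * C).trace ≤ RCLike.re (B * C).trace := by
  have h := re_trace_mul_nonneg (sub_nonneg.2 hAB) hC
  rwa [sub_mul, trace_sub, map_sub, sub_nonneg] at h

variable [Fintype m] [DecidableEq n] [DecidableEq m]

theorem continuousOn_spectrum (f : ℝ → ℝ) (A : Matrix n n 𝕜) : ContinuousOn f (spectrum ℝ A) :=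
  finite_real_spectrum.continuousOn f

theorem trace_cfc_conjTranspose_mul_self (f : ℝ → ℝ) (M : Matrix n n 𝕜) :
    (cfc f (Mᴴ * M)).trace = (cfc f (M * Mᴴ)).trace := by
  have hL := isHermitian_conjTranspose_mul_self M
  have hR := isHermitian_mul_conjTranspose_self M
  rw [trace_eq_neg_charpoly_nextCoeff, trace_eq_neg_charpoly_nextCoeff, hL.charpoly_cfc_eq,
    hR.charpoly_cfc_eq, (hL.eigenvalues_eq_eigenvalues_iff hR).2 (charpoly_mul_comm Mᴴ M)]

theorem re_trace_conj_cfc_mul_cfc {A : Matrix n n 𝕜} {B : Matrix m m 𝕜} (hA : A.IsHermitian)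
    (hB : B.IsHermitian) (K : Matrix n m 𝕜) (f g : ℝ → ℝ) :
    RCLike.re (Kᴴ * cfc f A * K * cfc g B).trace =
      ∑ j, ∑ i, f (hA.eigenvalues i) * g (hB.eigenvalues j) *
        ‖((hA.eigenvectorUnitary : Matrix n n 𝕜)ᴴ * K *
          (hB.eigenvectorUnitary : Matrix m m 𝕜)) i j‖ ^ 2 := by
  set U := (hA.eigenvectorUnitary : Matrix n n 𝕜)
  set V := (hB.eigenvectorUnitary : Matrix m m 𝕜)
  set W := Uᴴ * K * V with hW
  let Df : Matrix n n 𝕜 := diagonal (RCLike.ofReal ∘ f ∘ hA.eigenvalues)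
  let Dg : Matrix m m 𝕜 := diagonal (RCLike.ofReal ∘ g ∘ hB.eigenvalues)
  have hf : cfc f A = U * Df * Uᴴ := hA.cfc_eq f
  have hg : cfc g B = V * Dg * Vᴴ := hB.cfc_eq g
  have hcycle : (Kᴴ * cfc f A * K * cfc g B).trace = (Wᴴ * (Df * W * Dg)).trace := by
    rw [hf, hg, ← Matrix.mul_assoc, trace_mul_comm, hW]
    simp only [conjTranspose_mul, conjTranspose_conjTranspose, Matrix.mul_assoc]
  rw [hcycle, trace, map_sum]
  refine Finset.sum_congr rfl fun j _ => ?_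
  rw [diag_apply, mul_apply, map_sum]
  refine Finset.sum_congr rfl fun i _ => ?_
  have hnorm : star (W i j) * W i j = ((‖W i j‖ ^ 2 : ℝ) : 𝕜) := by
    rw [RCLike.ofReal_pow]
    exact RCLike.conj_mul (W i j)
  have hentry : Wᴴ j i * (Df * W * Dg) i j =
      ((f (hA.eigenvalues i) * g (hB.eigenvalues j) * ‖W i j‖ ^ 2 : ℝ) : 𝕜) := by
    rw [conjTranspose_apply, mul_diagonal, diagonal_mul, RCLike.ofReal_mul, ← hnorm,
      RCLike.ofReal_mul]
    simp only [Function.comp_apply]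
    ring
  rw [hentry, RCLike.ofReal_re]

theorem re_trace_conj_cfc_mul_cfc_le {A : Matrix n n 𝕜} {B : Matrix m m 𝕜} (hA : A.IsHermitian)
    (hB : B.IsHermitian) (K : Matrix n m 𝕜) {f g u v : ℝ → ℝ}
    (hfg : ∀ x ∈ spectrum ℝ A, ∀ y ∈ spectrum ℝ B, f x * g y ≤ u x + v y) :
    RCLike.re (Kᴴ * cfc f A * K * cfc g B).trace ≤
      RCLike.re (Kᴴ * cfc u A * K).trace + RCLike.re (Kᴴ * K * cfc v B).trace := by
  have hu := re_trace_conj_cfc_mul_cfc hA hB K u 1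
  have hv := re_trace_conj_cfc_mul_cfc hA hB K 1 v
  rw [cfc_one ℝ B, Matrix.mul_one] at hu
  rw [cfc_one ℝ A, Matrix.mul_one] at hv
  rw [re_trace_conj_cfc_mul_cfc hA hB, hu, hv, ← Finset.sum_add_distrib]
  simp only [← Finset.sum_add_distrib, ← add_mul, Pi.one_apply, one_mul, mul_one]
  gcongr
  exact hfg _ (hA.eigenvalues_mem_spectrum_real _) _ (hB.eigenvalues_mem_spectrum_real _)

theorem conjTranspose_rpow (A : Matrix n n 𝕜) (r : ℝ) : (A ^ r)ᴴ = A ^ r :=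
  (CFC.rpow_nonneg (a := A)).posSemidef.isHermitian

theorem rpow_add_of_add_ne_zero {A : Matrix n n 𝕜} (hA : 0 ≤ A) {r s : ℝ} (hrs : r + s ≠ 0) :
    A ^ (r + s) = A ^ r * A ^ s := by
  rw [CFC.rpow_eq_cfc_real hA, CFC.rpow_eq_cfc_real hA, CFC.rpow_eq_cfc_real hA,
    ← cfc_mul _ _ A (continuousOn_spectrum _ A) (continuousOn_spectrum _ A)]
  exact cfc_congr fun x hx => Real.rpow_add' (spectrum_nonneg_of_nonneg hA hx) hrs

theorem mul_rpow_sub_one {A : Matrix n n 𝕜} (hA : 0 ≤ A) {r : ℝ} (hr : r ≠ 0) :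
    A * A ^ (r - 1) = A ^ r := by
  have h := rpow_add_of_add_ne_zero hA (r := 1) (s := r - 1) (by rwa [add_sub_cancel])
  rw [add_sub_cancel, CFC.rpow_one A hA] at h
  exact h.symm

theorem mul_rpow_mul_rpow_neg {A : Matrix n n 𝕜} (hA : 0 ≤ A) (r : ℝ) :
    A * (A ^ r * A ^ (-r)) = A := by
  nth_rw 4 [← cfc_id ℝ A]
  nth_rw 1 [← cfc_id ℝ A]
  rw [CFC.rpow_eq_cfc_real hA, CFC.rpow_eq_cfc_real hA,
    ← cfc_mul _ _ A (continuousOn_spectrum _ A) (continuousOn_spectrum _ A),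
    ← cfc_mul _ _ A (continuousOn_spectrum _ A) (continuousOn_spectrum _ A)]
  refine cfc_congr fun x hx => ?_
  rcases (spectrum_nonneg_of_nonneg hA hx).eq_or_lt with rfl | hpos
  · exact zero_mul _
  · change x * (x ^ r * x ^ (-r)) = x
    rw [← Real.rpow_add hpos, add_neg_cancel, Real.rpow_zero, mul_one]

theorem rpow_mul_sandwich_mul_rpow {ρ σ : Matrix n n 𝕜} (hρ : ρ.IsHermitian) (hσ : 0 ≤ σ)
    (hker : ∀ v, σ *ᵥ v = 0 → ρ *ᵥ v = 0) (r : ℝ) :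
    σ ^ r * (σ ^ (-r) * ρ * σ ^ (-r)) * σ ^ r = ρ := by
  have hright : ρ * (σ ^ (-r) * σ ^ r) = ρ := by
    have hσ0 : σ * (σ ^ (-r) * σ ^ r - 1) = 0 := by
      have h := mul_rpow_mul_rpow_neg hσ (-r)
      rw [neg_neg] at h
      rw [mul_sub, h, mul_one, sub_self]
    rw [← sub_eq_zero, ← mul_eq_zero_of_ker_le hker hσ0, mul_sub, mul_one]
  have hleft : σ ^ r * σ ^ (-r) * ρ = ρ := by
    have h := congrArg conjTranspose hright
    rwa [conjTranspose_mul, conjTranspose_mul, conjTranspose_rpow, conjTranspose_rpow,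
      hρ.eq] at h
  calc σ ^ r * (σ ^ (-r) * ρ * σ ^ (-r)) * σ ^ r
      = σ ^ r * σ ^ (-r) * ρ * (σ ^ (-r) * σ ^ r) := by simp only [mul_assoc]
    _ = ρ := by rw [hleft, hright]

theorem mul_re_trace_mul_le_young {A B : Matrix n n 𝕜} (hA : 0 ≤ A) (hB : 0 ≤ B) {p q : ℝ}
    (hpq : p.HolderConjugate q) {c : ℝ} (hc : 0 ≤ c) :
    c * RCLike.re (A * B).trace ≤
      RCLike.re (A ^ p).trace / p + c ^ q * RCLike.re (B ^ q).trace / q := by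
  have h := re_trace_conj_cfc_mul_cfc_le hA.posSemidef.isHermitian hB.posSemidef.isHermitian
    (1 : Matrix n n 𝕜) (f := fun x => x) (g := fun y => c • y) (u := fun x => p⁻¹ • x ^ p)
    (v := fun y => (c ^ q / q) • y ^ q) fun x hx y hy => by
      have hx0 := spectrum_nonneg_of_nonneg hA hx
      have hy0 := spectrum_nonneg_of_nonneg hB hy
      calc x * (c * y) ≤ x ^ p / p + (c * y) ^ q / q :=
            Real.young_inequality_of_nonneg hx0 (mul_nonneg hc hy0) hpq
        _ = p⁻¹ * x ^ p + c ^ q / q * y ^ q := by rw [Real.mul_rpow hc hy0]; ring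
  rw [cfc_smul _ _ A (continuousOn_spectrum _ A), cfc_smul _ _ B (continuousOn_spectrum _ B),
    cfc_smul _ _ B (continuousOn_spectrum _ B), cfc_id' ℝ A, cfc_id' ℝ B,
    ← CFC.rpow_eq_cfc_real hA, ← CFC.rpow_eq_cfc_real hB] at h
  simp only [conjTranspose_one, one_mul, mul_one, mul_smul_comm, trace_smul, RCLike.smul_re] at h
  calc _ ≤ _ := h
    _ = _ := by ring

theorem re_trace_conj_rpow_le {A : Matrix n n 𝕜} (hA : 0 ≤ A) {K : Matrix n m 𝕜}
    (hK : Kᴴ * K ≤ 1) {q : ℝ} (hq : 1 < q) :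
    RCLike.re ((Kᴴ * A * K) ^ q).trace ≤ RCLike.re (Kᴴ * A ^ q * K).trace := by
  have hpq := (Real.HolderConjugate.conjExponent hq).symm
  set p := q.conjExponent
  set Z := Kᴴ * A * K with hZdef
  have hZ : 0 ≤ Z := (hA.posSemidef.conjTranspose_mul_mul_same K).nonneg
  have hexp : (q - 1) * p = q := hpq.symm.sub_one_mul_conj
  -- Pairing `A` with `Z ^ (q - 1)` makes the left-hand side `tr (Z ^ q)`.
  have h := re_trace_conj_cfc_mul_cfc_le hA.posSemidef.isHermitian hZ.posSemidef.isHermitian K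
    (f := fun x => x) (g := fun z => z ^ (q - 1)) (u := fun x => q⁻¹ • x ^ q)
    (v := fun z => p⁻¹ • z ^ q) fun x hx z hz => by
      have hz0 := spectrum_nonneg_of_nonneg hZ hz
      calc x * z ^ (q - 1) ≤ x ^ q / q + (z ^ (q - 1)) ^ p / p :=
            Real.young_inequality_of_nonneg (spectrum_nonneg_of_nonneg hA hx)
              (Real.rpow_nonneg hz0 _) hpq.symm
        _ = q⁻¹ * x ^ q + p⁻¹ * z ^ q := by rw [← Real.rpow_mul hz0, hexp]; ring
  rw [cfc_smul _ _ A (continuousOn_spectrum _ A), cfc_smul _ _ Z (continuousOn_spectrum _ Z),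
    cfc_id' ℝ A, ← CFC.rpow_eq_cfc_real hA, ← CFC.rpow_eq_cfc_real hZ, ← CFC.rpow_eq_cfc_real hZ,
    ← hZdef, mul_rpow_sub_one hZ hpq.symm.ne_zero] at h
  have hcontr : RCLike.re (Kᴴ * K * Z ^ q).trace ≤ RCLike.re (Z ^ q).trace := by
    simpa only [one_mul] using re_trace_mul_le hK (CFC.rpow_nonneg (a := Z) (y := q))
  simp only [Matrix.mul_smul, Matrix.smul_mul, trace_smul, RCLike.smul_re] at h
  have hp_inv : 0 < p⁻¹ := inv_pos.2 hpq.pos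
  have hq_inv : 0 < q⁻¹ := inv_pos.2 hpq.symm.pos
  have hsplit : p⁻¹ * RCLike.re (Z ^ q).trace + q⁻¹ * RCLike.re (Z ^ q).trace =
      RCLike.re (Z ^ q).trace := by
    rw [← add_mul, hpq.inv_add_inv_eq_one, one_mul]
  refine le_of_mul_le_mul_left ?_ hq_inv
  linarith [mul_le_mul_of_nonneg_left hcontr hp_inv.le]

theorem re_trace_rpow_sandwich_le {σ T : Matrix n n 𝕜} (hσ : 0 ≤ σ) (hT : 0 ≤ T) (hT1 : T ≤ 1)
    {q : ℝ} (hq : 1 < q) :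
    RCLike.re ((σ ^ (1 / (2 * q)) * T * σ ^ (1 / (2 * q))) ^ q).trace ≤
      RCLike.re (σ * T).trace := by
  have hq0 : 0 < q := by linarith
  set S := σ ^ (1 / (2 * q))
  set K := CFC.sqrt T
  have hS : Sᴴ = S := conjTranspose_rpow σ _
  have hK : Kᴴ = K := (CFC.sqrt_nonneg T).posSemidef.isHermitian
  have hKK : K * K = T := CFC.sqrt_mul_sqrt_self T hT
  have hSS : S * S = σ ^ q⁻¹ := by
    rw [← rpow_add_of_add_ne_zero hσ (by positivity)]
    congr 1
    field_simp
    norm_num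
  calc RCLike.re ((S * T * S) ^ q).trace
      = RCLike.re (((S * K) * (S * K)ᴴ) ^ q).trace := by
        rw [conjTranspose_mul, hS, hK, ← hKK]
        simp only [mul_assoc]
    _ = RCLike.re (((S * K)ᴴ * (S * K)) ^ q).trace := by
        rw [CFC.rpow_eq_cfc_real (posSemidef_self_mul_conjTranspose _).nonneg,
          CFC.rpow_eq_cfc_real (posSemidef_conjTranspose_mul_self _).nonneg,
          trace_cfc_conjTranspose_mul_self]
    _ = RCLike.re ((Kᴴ * σ ^ q⁻¹ * K) ^ q).trace := by
        rw [conjTranspose_mul, hS, ← hSS]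
        simp only [mul_assoc]
    _ ≤ RCLike.re (Kᴴ * (σ ^ q⁻¹) ^ q * K).trace :=
        re_trace_conj_rpow_le CFC.rpow_nonneg (by rwa [hK, hKK]) hq
    _ = RCLike.re (σ * T).trace := by
        rw [CFC.rpow_rpow_of_exponent_nonneg σ _ _ (by positivity) hq0.le hσ,
          inv_mul_cancel₀ hq0.ne', CFC.rpow_one σ hσ, hK, trace_mul_comm, ← mul_assoc, hKK,
          trace_mul_comm]

/-- The sandwiched Rényi power `tr((σ^{-β/(2α)} ρ σ^{-β/(2α)})^α)`, `β = α - 1`, of matrices over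
`ℝ` or `ℂ`, for the powers `CFC.rpow` of the continuous functional calculus. Since `0 ^ r = 0` for
`r ≠ 0`, a negative power of `σ` inverts `σ` on its support only. -/
def sandwichedPower (α : ℝ) (ρ σ : Matrix n n 𝕜) : ℝ :=
  RCLike.re ((σ ^ (-(α - 1) / (2 * α)) * ρ * σ ^ (-(α - 1) / (2 * α))) ^ α).trace

theorem mul_re_trace_mul_le_sandwichedPower_add {ρ σ T : Matrix n n 𝕜} (hρ : 0 ≤ ρ) (hσ : 0 ≤ σ)
    (hker : ∀ v, σ *ᵥ v = 0 → ρ *ᵥ v = 0) (hT : 0 ≤ T) (hT1 : T ≤ 1) {α q : ℝ}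
    (hαq : α.HolderConjugate q) {c : ℝ} (hc : 0 ≤ c) :
    c * RCLike.re (ρ * T).trace ≤
      sandwichedPower α ρ σ / α + c ^ q * RCLike.re (σ * T).trace / q := by
  have hexp : -(α - 1) / (2 * α) = -(1 / (2 * q)) := by
    rw [hαq.conjugate_eq]
    field_simp [hαq.ne_zero, hαq.sub_one_ne_zero]
  set S := σ ^ (1 / (2 * q))
  set X := σ ^ (-(1 / (2 * q))) * ρ * σ ^ (-(1 / (2 * q))) with hXdef
  have hX : 0 ≤ X := conjugate_nonneg_of_nonneg hρ CFC.rpow_nonneg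
  have hSTS : 0 ≤ S * T * S := conjugate_nonneg_of_nonneg hT CFC.rpow_nonneg
  have hρT : (ρ * T).trace = (X * (S * T * S)).trace := by
    rw [← rpow_mul_sandwich_mul_rpow hρ.posSemidef.isHermitian hσ hker (1 / (2 * q)),
      trace_mul_comm, ← mul_assoc, trace_mul_comm, ← mul_assoc, ← mul_assoc, trace_mul_comm]
  calc c * RCLike.re (ρ * T).trace
      ≤ RCLike.re (X ^ α).trace / α + c ^ q * RCLike.re ((S * T * S) ^ q).trace / q := by
        rw [hρT]
        exact mul_re_trace_mul_le_young hX hSTS hαq hc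
    _ ≤ sandwichedPower α ρ σ / α + c ^ q * RCLike.re (σ * T).trace / q := by
        rw [sandwichedPower, hexp, ← hXdef]
        have := hαq.symm.nonneg
        gcongr _ + _ * ?_ / _
        exact re_trace_rpow_sandwich_le hσ hT hT1 hαq.symm.lt

theorem rpow_mul_re_trace_mul_le_sandwichedPower {ρ σ T : Matrix n n 𝕜} (hρ : 0 ≤ ρ) (hσ : 0 ≤ σ)
    (hker : ∀ v, σ *ᵥ v = 0 → ρ *ᵥ v = 0) (hT : 0 ≤ T) (hT1 : T ≤ 1) {p : ℝ} (hp : 0 ≤ p)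
    (hpT : p * RCLike.re (σ * T).trace ≤ RCLike.re (ρ * T).trace) {α : ℝ} (hα : 1 < α) :
    p ^ (α - 1) * RCLike.re (ρ * T).trace ≤ sandwichedPower α ρ σ := by
  have hαq := Real.HolderConjugate.conjExponent hα
  set q := α.conjExponent
  set t := RCLike.re (ρ * T).trace
  have hpow : (p ^ (α - 1)) ^ q = p ^ (α - 1) * p := by
    rw [← Real.rpow_mul hp, hαq.sub_one_mul_conj, ← Real.rpow_add_one' hp (by linarith),
      sub_add_cancel]
  have hβ := Real.rpow_nonneg hp (α - 1)
  have hyoung : p ^ (α - 1) * t ≤ sandwichedPower α ρ σ / α + p ^ (α - 1) * t / q := by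
    refine (mul_re_trace_mul_le_sandwichedPower_add hρ hσ hker hT hT1 hαq hβ).trans ?_
    rw [hpow, mul_assoc]
    have := hαq.symm.nonneg
    gcongr
  have hsplit : p ^ (α - 1) * t / α + p ^ (α - 1) * t / q = p ^ (α - 1) * t := by
    rw [div_eq_mul_inv, div_eq_mul_inv, ← mul_add, hαq.inv_add_inv_eq_one, mul_one]
  rw [← div_le_div_iff_of_pos_right hαq.pos]
  linarith

/-- The projector `{A > 0}` onto the support of the positive part of a Hermitian matrix over `ℝ`
or `ℂ`. -/
def positiveProj (A : Matrix n n 𝕜) : Matrix n n 𝕜 :=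
  cfc (fun x : ℝ => if 0 < x then 1 else 0) A

theorem positiveProj_nonneg (A : Matrix n n 𝕜) : 0 ≤ positiveProj A :=
  cfc_nonneg fun x _ => by split_ifs <;> norm_num

theorem positiveProj_le_one (A : Matrix n n 𝕜) : positiveProj A ≤ 1 :=
  cfc_le_one _ _ fun x _ => by split_ifs <;> norm_num

theorem posPart_eq_cfc_max (A : Matrix n n 𝕜) : A⁺ = cfc (fun x : ℝ => max x 0) A := by
  rw [CFC.posPart_def, cfcₙ_eq_cfc]
  rfl

theorem mul_positiveProj {A : Matrix n n 𝕜} (hA : IsSelfAdjoint A) : A * positiveProj A = A⁺ := by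
  nth_rw 1 [← cfc_id ℝ A]
  rw [positiveProj, posPart_eq_cfc_max,
    ← cfc_mul _ _ A (continuousOn_spectrum _ A) (continuousOn_spectrum _ A)]
  refine cfc_congr fun x _ => ?_
  rcases lt_or_ge 0 x with hx | hx
  · simp [hx, hx.le]
  · simp [hx, hx.not_gt]

theorem re_trace_posPart_sub_smul {ρ σ : Matrix n n 𝕜} (hρ : IsSelfAdjoint ρ)
    (hσ : IsSelfAdjoint σ) (p : ℝ) :
    RCLike.re (ρ - p • σ)⁺.trace = RCLike.re (ρ * positiveProj (ρ - p • σ)).trace -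
      p * RCLike.re (σ * positiveProj (ρ - p • σ)).trace := by
  rw [← mul_positiveProj (hρ.sub (.smul (.all p) hσ)), sub_mul, smul_mul_assoc, trace_sub,
    trace_smul, map_sub, RCLike.smul_re]

theorem stmt8_general {ρ σ : Matrix n n 𝕜} (hρ : 0 ≤ ρ) (hσ : 0 ≤ σ)
    (hker : ∀ v, σ *ᵥ v = 0 → ρ *ᵥ v = 0) {p : ℝ} (hp : 0 ≤ p) {α : ℝ} (hα : 1 < α) :
    p ^ (α - 1) * RCLike.re (ρ - p • σ)⁺.trace ≤
        p ^ (α - 1) * RCLike.re (ρ * positiveProj (ρ - p • σ)).trace ∧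
      p ^ (α - 1) * RCLike.re (ρ * positiveProj (ρ - p • σ)).trace ≤ sandwichedPower α ρ σ := by
  have hsplit := re_trace_posPart_sub_smul hρ.posSemidef.isHermitian hσ.posSemidef.isHermitian p
  set Q := positiveProj (ρ - p • σ)
  have hQ : 0 ≤ Q := positiveProj_nonneg _
  have hpos : 0 ≤ RCLike.re (ρ - p • σ)⁺.trace := re_trace_nonneg (CFC.posPart_nonneg _)
  have hσQ : 0 ≤ p * RCLike.re (σ * Q).trace := mul_nonneg hp (re_trace_mul_nonneg hσ hQ)
  constructor
  · exact mul_le_mul_of_nonneg_left (by linarith) (Real.rpow_nonneg hp _)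
  · exact rpow_mul_re_trace_mul_le_sandwichedPower hρ hσ hker hQ (positiveProj_le_one _) hp
      (by linarith) hα

theorem mfun_eq_cfc {d : ℕ} (f : ℝ → ℝ) (A : Matrix (Fin d) (Fin d) ℂ) : mfun f A = cfc f A := by
  rw [mfun]
  split_ifs with hA
  · exact (hA.cfc_eq f).symm
  · exact (cfc_apply_of_not_predicate A hA).symm

theorem mpow_eq_rpow_s8 {d : ℕ} {A : Matrix (Fin d) (Fin d) ℂ} (hA : 0 ≤ A) {r : ℝ} (hr : r ≠ 0) :
    mpow A r = A ^ r := by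
  have hpow : (fun x : ℝ => if x = 0 then 0 else x ^ r) = fun x => x ^ r := by
    funext x
    split_ifs with hx
    · rw [hx, Real.zero_rpow hr]
    · rfl
  rw [mpow, hpow, mfun_eq_cfc, CFC.rpow_eq_cfc_real hA]

theorem sandR_eq_sandwichedPower {d : ℕ} {ρ σ : Matrix (Fin d) (Fin d) ℂ} (hρ : 0 ≤ ρ)
    (hσ : 0 ≤ σ) {α : ℝ} (hα0 : α ≠ 0) (hα1 : α ≠ 1) : sandR α ρ σ = sandwichedPower α ρ σ := by
  have hr : -(α - 1) / (2 * α) ≠ 0 :=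
    div_ne_zero (neg_ne_zero.2 (sub_ne_zero.2 hα1)) (mul_ne_zero two_ne_zero hα0)
  rw [sandR, mpow_eq_rpow_s8 hσ hr,
    mpow_eq_rpow_s8 (conjugate_nonneg_of_nonneg hρ CFC.rpow_nonneg) hα0]
  rfl

end

/-- For `0 ≤ ρ ≪ σ` and `p ≥ 0`:
`p^β tr([ρ - pσ]₊) ≤ p^β tr(ρ Π) ≤ R_α(ρ|σ)` where `Π = {ρ - pσ > 0}` and `β = α - 1`. -/
theorem stmt8 {d : ℕ} (ρ σ : Matrix (Fin d) (Fin d) ℂ)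
    (hρ : ρ.PosSemidef) (hσ : σ.PosSemidef) (hsupp : suppSubset ρ σ)
    (p : ℝ) (hp : 0 ≤ p) (α : ℝ) (hα : 1 < α) :
    p ^ (α - 1) * rtr (posPartM (ρ - (p : ℂ) • σ)) ≤
        p ^ (α - 1) * rtr (ρ * posSuppProj (ρ - (p : ℂ) • σ)) ∧
      p ^ (α - 1) * rtr (ρ * posSuppProj (ρ - (p : ℂ) • σ)) ≤ sandR α ρ σ := by
  rw [Complex.coe_smul, posPartM, posSuppProj, mfun_eq_cfc, mfun_eq_cfc, ← posPart_eq_cfc_max,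
    sandR_eq_sandwichedPower hρ.nonneg hσ.nonneg (by linarith) hα.ne']
  exact stmt8_general hρ.nonneg hσ.nonneg hsupp hp hα
end
end

section
/- If F is a QEF with power β for a model closed under joint convex combinations, then the QEF inequality is preserved under convex combinations of states: if the QEF inequality holds at each ρ_i(c,z) then it holds at Σ_i λ_i ρ_i(c,z) for any convex weights λ_i, as a consequence of joint convexity of the sandwiched Rényi power (τ,σ) ↦ R_α(τ|σ). -/
open scoped Matrix BigOperators Classical ComplexOrder

noncomputable section

/-!
For `α > 1` and `p = (α - 1) / α`, the trace Young inequality gives the variational formula of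
Frank and Lieb, `R_α(ρ|σ) = sup_K (α tr (K* ρ K) - (α - 1) tr ((K* σ ^ p K) ^ (1 / p)))`. For fixed
`K` the first term is linear in `ρ`, and `σ ↦ tr ((K* σ ^ p K) ^ (1 / p))` is concave by Epstein's
theorem, so `R_α` is a supremum of jointly convex functions. Epstein's theorem follows, again by
Young's inequality, from Lieb's joint concavity of `(A, X) ↦ tr (K* A ^ p K X ^ (1 - p))`. For the
latter, `x ^ p * y ^ (1 - p)` is an integral of multiples of parallel sums `x : t y`, and the
quadratic form of the parallel sum of left multiplication by `A` and right multiplication by `t B`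
is the minimum over `W` of `tr (W* A W) + t tr ((K - W)* (K - W) B)`, which is linear in `(A, B)`.

Since the weights `F` are nonnegative, joint convexity of each `R_α(ρ(c,z)|ρ(z))` shows that the
left side of the QEF inequality is convex in the state, while its right side is linear.
-/

section Convexity

variable {𝕜 E β : Type*} [Semiring 𝕜] [PartialOrder 𝕜] [AddCommMonoid E] [Module 𝕜 E]
  [AddCommMonoid β] [PartialOrder β] [IsOrderedAddMonoid β] [SMul 𝕜 β] [PosSMulMono 𝕜 β]
  {s : Set E} {f : E → β}

theorem convexOn_of_exists_convexOn_le (hs : Convex 𝕜 s)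
    (h : ∀ x ∈ s, ∃ g, ConvexOn 𝕜 s g ∧ g x = f x ∧ ∀ y ∈ s, g y ≤ f y) : ConvexOn 𝕜 s f := by
  refine ⟨hs, fun x hx y hy a b ha hb hab => ?_⟩
  obtain ⟨g, hg, hgf, hle⟩ := h _ (hs hx hy ha hb hab)
  rw [← hgf]
  refine (hg.2 hx hy ha hb hab).trans ?_
  gcongr
  exacts [hle x hx, hle y hy]

theorem concaveOn_of_exists_le_concaveOn (hs : Convex 𝕜 s)
    (h : ∀ x ∈ s, ∃ g, ConcaveOn 𝕜 s g ∧ g x = f x ∧ ∀ y ∈ s, f y ≤ g y) : ConcaveOn 𝕜 s f :=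
  convexOn_of_exists_convexOn_le (β := βᵒᵈ) hs h

end Convexity

section Matrices

variable {m n 𝕜 : Type*} [Fintype m] [Fintype n] [RCLike 𝕜]

/-- The real part of the trace, as a real-linear functional on square matrices. -/
def reTrace : Matrix n n 𝕜 →ₗ[ℝ] ℝ :=
  RCLike.reLm ∘ₗ Matrix.traceLinearMap n ℝ 𝕜

theorem reTrace_apply (A : Matrix n n 𝕜) : reTrace A = RCLike.re A.trace := rfl

theorem reTrace_mul_comm (A : Matrix m n 𝕜) (B : Matrix n m 𝕜) :
    reTrace (A * B) = reTrace (B * A) := by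
  rw [reTrace_apply, reTrace_apply, Matrix.trace_mul_comm]

theorem reTrace_conjTranspose_mul (L : Matrix m n 𝕜) (M : Matrix m n 𝕜) :
    reTrace (Lᴴ * M) = ∑ i, ∑ j, RCLike.re (star (L i j) * M i j) := by
  rw [reTrace_apply, Matrix.trace, map_sum, Finset.sum_comm]
  simp [Matrix.mul_apply]

omit [Fintype n] in
theorem convex_setOf_posSemidef : Convex ℝ {A : Matrix n n 𝕜 | A.PosSemidef} :=
  fun _ hA _ hB _ _ ha hb _ => (hA.smul ha).add (hB.smul hb)

theorem mulVec_eq_zero_of_add_mulVec_eq_zero {A B : Matrix n n 𝕜} (hA : A.PosSemidef)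
    (hB : B.PosSemidef) {v : n → 𝕜} (h : (A + B) *ᵥ v = 0) : A *ᵥ v = 0 := by
  rw [← hA.dotProduct_mulVec_zero_iff]
  have hsum : star v ⬝ᵥ A *ᵥ v + star v ⬝ᵥ B *ᵥ v = 0 := by
    rw [← dotProduct_add, ← Matrix.add_mulVec, h, dotProduct_zero]
  exact ((add_eq_zero_iff_of_nonneg (hA.dotProduct_mulVec_nonneg v)
    (hB.dotProduct_mulVec_nonneg v)).1 hsum).1

omit [Fintype m] [Fintype n] in
theorem convex_posSemidef_prod_posSemidef :
    Convex ℝ ({A : Matrix m m 𝕜 | A.PosSemidef} ×ˢ {B : Matrix n n 𝕜 | B.PosSemidef}) :=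
  convex_setOf_posSemidef.prod convex_setOf_posSemidef

variable [DecidableEq m] [DecidableEq n]

theorem continuousOn_real_spectrum (A : Matrix n n 𝕜) (f : ℝ → ℝ) :
    ContinuousOn f (spectrum ℝ A) :=
  A.finite_real_spectrum.continuousOn f

theorem nonneg_of_mem_spectrum {A : Matrix n n 𝕜} (hA : A.PosSemidef) {x : ℝ}
    (hx : x ∈ spectrum ℝ A) : 0 ≤ x := by
  obtain ⟨i, rfl⟩ := hA.1.spectrum_real_eq_range_eigenvalues ▸ hx
  exact hA.eigenvalues_nonneg i

theorem cfc_mul_cfc (A : Matrix n n 𝕜) (f g : ℝ → ℝ) :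
    cfc f A * cfc g A = cfc (fun x => f x * g x) A :=
  (cfc_mul f g A (continuousOn_real_spectrum A f) (continuousOn_real_spectrum A g)).symm

theorem cfc_cfc {A : Matrix n n 𝕜} (hA : A.IsHermitian) (f g : ℝ → ℝ) :
    cfc g (cfc f A) = cfc (fun x => g (f x)) A :=
  (cfc_comp' g f A ((A.finite_real_spectrum.image f).continuousOn g)
    (continuousOn_real_spectrum A f) hA).symm

theorem cfc_eq_eigenvectorUnitary_mul_diagonal_mul {A : Matrix n n 𝕜} (hA : A.IsHermitian)
    (f : ℝ → ℝ) :
    cfc f A = hA.eigenvectorUnitary * Matrix.diagonal (fun i => (f (hA.eigenvalues i) : 𝕜)) *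
      (hA.eigenvectorUnitary : Matrix n n 𝕜)ᴴ := by
  rw [hA.cfc_eq, Matrix.IsHermitian.cfc, Unitary.conjStarAlgAut_apply]
  rfl

theorem reTrace_cfc_eq_sum_roots_charpoly {A : Matrix n n 𝕜} (hA : A.IsHermitian) (f : ℝ → ℝ) :
    reTrace (cfc f A) = (A.charpoly.roots.map fun z => f (RCLike.re z)).sum := by
  rw [reTrace_apply, cfc_eq_eigenvectorUnitary_mul_diagonal_mul hA, Matrix.trace_mul_comm,
    ← Matrix.mul_assoc, hA.roots_charpoly_eq_eigenvalues]
  simp [← Matrix.star_eq_conjTranspose]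

theorem reTrace_cfc_mul_conjTranspose_self (G : Matrix n n 𝕜) (f : ℝ → ℝ) :
    reTrace (cfc f (G * Gᴴ)) = reTrace (cfc f (Gᴴ * G)) := by
  rw [reTrace_cfc_eq_sum_roots_charpoly (Matrix.isHermitian_mul_conjTranspose_self G),
    reTrace_cfc_eq_sum_roots_charpoly (Matrix.isHermitian_conjTranspose_mul_self G),
    Matrix.charpoly_mul_comm]

/-- The Moore–Penrose real power of a Hermitian matrix: `x ↦ x ^ p` on the support and `0` on the
kernel, so that `suppRpow A 0` is the projection onto the support. -/
def suppRpow (A : Matrix n n 𝕜) (p : ℝ) : Matrix n n 𝕜 :=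
  cfc (fun x : ℝ => if x = 0 then 0 else x ^ p) A

theorem suppRpow_eq_cfc_rpow (A : Matrix n n 𝕜) {p : ℝ} (hp : p ≠ 0) :
    suppRpow A p = cfc (· ^ p : ℝ → ℝ) A := by
  refine cfc_congr fun x _ => ?_
  split_ifs with hx
  · rw [hx, Real.zero_rpow hp]
  · rfl

theorem suppRpow_one {A : Matrix n n 𝕜} (hA : A.IsHermitian) : suppRpow A 1 = A := by
  simp only [suppRpow_eq_cfc_rpow A one_ne_zero, Real.rpow_one]
  exact cfc_id' ℝ A hA.isSelfAdjoint

theorem isHermitian_suppRpow (A : Matrix n n 𝕜) (p : ℝ) : (suppRpow A p).IsHermitian :=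
  cfc_predicate _ A

section PosSemidef

variable {A : Matrix n n 𝕜}

theorem suppRpow_mul_suppRpow (hA : A.PosSemidef) (p q : ℝ) :
    suppRpow A p * suppRpow A q = suppRpow A (p + q) := by
  rw [suppRpow, suppRpow, cfc_mul_cfc]
  refine cfc_congr fun x hx => ?_
  rcases (nonneg_of_mem_spectrum hA hx).eq_or_lt' with rfl | hpos
  · simp
  · simp only [hpos.ne', if_false, Real.rpow_add hpos]

theorem posSemidef_suppRpow (hA : A.PosSemidef) (p : ℝ) : (suppRpow A p).PosSemidef := by
  rw [← add_halves p, ← suppRpow_mul_suppRpow hA]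
  nth_rewrite 1 [← (isHermitian_suppRpow A (p / 2)).eq]
  exact Matrix.posSemidef_conjTranspose_mul_self _

theorem suppRpow_suppRpow (hA : A.PosSemidef) (p q : ℝ) :
    suppRpow (suppRpow A p) q = suppRpow A (p * q) := by
  rw [suppRpow, suppRpow, cfc_cfc hA.1]
  refine cfc_congr fun x hx => ?_
  rcases (nonneg_of_mem_spectrum hA hx).eq_or_lt' with rfl | hpos
  · simp
  · simp only [hpos.ne', (Real.rpow_pos_of_pos hpos p).ne', if_false, Real.rpow_mul hpos.le]

theorem mul_suppRpow (hA : A.PosSemidef) (p : ℝ) : A * suppRpow A p = suppRpow A (1 + p) := by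
  rw [← suppRpow_mul_suppRpow hA, suppRpow_one hA.1]

theorem mul_suppRpow_eq_self {B : Matrix n n 𝕜} (hA : A.PosSemidef) (hBA : B * A = A) (p : ℝ) :
    B * suppRpow A p = suppRpow A p := by
  rw [← add_sub_cancel 1 p, ← mul_suppRpow hA, ← Matrix.mul_assoc, hBA]

theorem mul_suppRpow_zero_of_ker_le {B : Matrix n n 𝕜} (hA : A.PosSemidef)
    (hAB : ∀ v, A *ᵥ v = 0 → B *ᵥ v = 0) : B * suppRpow A 0 = B := by
  have hmul : A * (1 - suppRpow A 0) = 0 := by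
    rw [Matrix.mul_sub, Matrix.mul_one, mul_suppRpow hA, add_zero, suppRpow_one hA.1, sub_self]
  have hker : B * (1 - suppRpow A 0) = 0 := Matrix.ext_of_mulVec_single fun i => by
    rw [← Matrix.mulVec_mulVec, Matrix.zero_mulVec]
    exact hAB _ (by rw [Matrix.mulVec_mulVec, hmul, Matrix.zero_mulVec])
  rw [Matrix.mul_sub, Matrix.mul_one, sub_eq_zero] at hker
  exact hker.symm

end PosSemidef

section SpectralForm

open MeasureTheory

/-- The matrix of `K` in the eigenbases of the Hermitian matrices `A` (rows) and `B` (columns). -/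
def eigenCoeff {A : Matrix m m 𝕜} {B : Matrix n n 𝕜} (hA : A.IsHermitian) (hB : B.IsHermitian)
    (K : Matrix m n 𝕜) : Matrix m n 𝕜 :=
  (hA.eigenvectorUnitary : Matrix m m 𝕜)ᴴ * K * (hB.eigenvectorUnitary : Matrix n n 𝕜)

theorem eigenCoeff_sub {A : Matrix m m 𝕜} {B : Matrix n n 𝕜} (hA : A.IsHermitian)
    (hB : B.IsHermitian) (K L : Matrix m n 𝕜) :
    eigenCoeff hA hB (K - L) = eigenCoeff hA hB K - eigenCoeff hA hB L := by
  simp only [eigenCoeff, Matrix.mul_sub, Matrix.sub_mul]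

theorem eigenCoeff_surjective {A : Matrix m m 𝕜} {B : Matrix n n 𝕜} (hA : A.IsHermitian)
    (hB : B.IsHermitian) : Function.Surjective (eigenCoeff hA hB) := by
  intro L
  refine ⟨(hA.eigenvectorUnitary : Matrix m m 𝕜) * L * (hB.eigenvectorUnitary : Matrix n n 𝕜)ᴴ, ?_⟩
  simp only [eigenCoeff, ← Matrix.star_eq_conjTranspose, Matrix.mul_assoc,
    Unitary.coe_star_mul_self, Matrix.mul_one]
  rw [← Matrix.mul_assoc, Unitary.coe_star_mul_self, Matrix.one_mul]

/-- The quadratic form `⟨K, φ(L_A, R_B) K⟩` of the double operator integral with symbol `φ`, where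
`L_A` and `R_B` are left multiplication by `A` and right multiplication by `B`. The junk value is
`0` if `A` or `B` is not Hermitian. -/
def spectralForm (φ : ℝ → ℝ → ℝ) (A : Matrix m m 𝕜) (B : Matrix n n 𝕜) (K : Matrix m n 𝕜) : ℝ :=
  if h : A.IsHermitian ∧ B.IsHermitian then
    ∑ i, ∑ j, φ (h.1.eigenvalues i) (h.2.eigenvalues j) * ‖eigenCoeff h.1 h.2 K i j‖ ^ 2
  else 0

variable {A : Matrix m m 𝕜} {B : Matrix n n 𝕜}

theorem spectralForm_eq_sum (hA : A.IsHermitian) (hB : B.IsHermitian) (φ : ℝ → ℝ → ℝ)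
    (K : Matrix m n 𝕜) :
    spectralForm φ A B K =
      ∑ i, ∑ j, φ (hA.eigenvalues i) (hB.eigenvalues j) * ‖eigenCoeff hA hB K i j‖ ^ 2 :=
  dif_pos ⟨hA, hB⟩

theorem reTrace_conjTranspose_mul_cfc_mul_cfc (hA : A.IsHermitian) (hB : B.IsHermitian)
    (f g : ℝ → ℝ) (K : Matrix m n 𝕜) :
    reTrace (Kᴴ * cfc f A * K * cfc g B) = spectralForm (fun x y => f x * g y) A B K := by
  rw [spectralForm_eq_sum hA hB, cfc_eq_eigenvectorUnitary_mul_diagonal_mul hA,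
    cfc_eq_eigenvectorUnitary_mul_diagonal_mul hB]
  set U := (hA.eigenvectorUnitary : Matrix m m 𝕜) with hU
  set V := (hB.eigenvectorUnitary : Matrix n n 𝕜) with hV
  set D := Matrix.diagonal fun i => (f (hA.eigenvalues i) : 𝕜) with hD
  set E := Matrix.diagonal fun j => (g (hB.eigenvalues j) : 𝕜) with hE
  set L := eigenCoeff hA hB K with hL
  calc reTrace (Kᴴ * (U * D * Uᴴ) * K * (V * E * Vᴴ))
    _ = reTrace (Kᴴ * (U * D * Uᴴ) * K * (V * E) * Vᴴ) := by simp only [Matrix.mul_assoc]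
    _ = reTrace (Lᴴ * (D * L * E)) := by
      rw [reTrace_mul_comm]
      simp only [hL, eigenCoeff, Matrix.conjTranspose_mul, Matrix.conjTranspose_conjTranspose,
        Matrix.mul_assoc, ← hU, ← hV]
    _ = _ := by
      rw [reTrace_conjTranspose_mul]
      refine Finset.sum_congr rfl fun i _ => Finset.sum_congr rfl fun j _ => ?_
      rw [hE, Matrix.mul_diagonal, hD, Matrix.diagonal_mul]
      have : star (L i j) * (f (hA.eigenvalues i) * L i j * g (hB.eigenvalues j)) =
        ((f (hA.eigenvalues i) * g (hB.eigenvalues j) * ‖L i j‖ ^ 2 : ℝ) : 𝕜) := by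
        push_cast
        rw [← RCLike.conj_mul]
        simp only [RCLike.star_def]
        ring
      rw [this, RCLike.ofReal_re]

theorem spectralForm_add (φ ψ : ℝ → ℝ → ℝ) (K : Matrix m n 𝕜) :
    spectralForm (fun x y => φ x y + ψ x y) A B K =
      spectralForm φ A B K + spectralForm ψ A B K := by
  unfold spectralForm
  split_ifs
  · simp only [add_mul, Finset.sum_add_distrib]
  · rw [add_zero]

theorem spectralForm_mono {φ ψ : ℝ → ℝ → ℝ}
    (h : ∀ x ∈ spectrum ℝ A, ∀ y ∈ spectrum ℝ B, φ x y ≤ ψ x y) (K : Matrix m n 𝕜) :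
    spectralForm φ A B K ≤ spectralForm ψ A B K := by
  unfold spectralForm
  split_ifs with hAB
  · gcongr with i _ j _
    exact h _ (hAB.1.eigenvalues_mem_spectrum_real i) _ (hAB.2.eigenvalues_mem_spectrum_real j)
  · rfl

theorem spectralForm_congr {φ ψ : ℝ → ℝ → ℝ}
    (h : ∀ x ∈ spectrum ℝ A, ∀ y ∈ spectrum ℝ B, φ x y = ψ x y) (K : Matrix m n 𝕜) :
    spectralForm φ A B K = spectralForm ψ A B K :=
  le_antisymm (spectralForm_mono (fun x hx y hy => (h x hx y hy).le) K)
    (spectralForm_mono (fun x hx y hy => (h x hx y hy).ge) K)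

theorem spectralForm_const_mul (c : ℝ) (φ : ℝ → ℝ → ℝ) (K : Matrix m n 𝕜) :
    spectralForm (fun x y => c * φ x y) A B K = c * spectralForm φ A B K := by
  unfold spectralForm
  split_ifs
  · simp only [Finset.mul_sum, mul_assoc]
  · rw [mul_zero]

theorem integrable_spectralForm {X : Type*} {mX : MeasurableSpace X} {μ : Measure X}
    {φ : X → ℝ → ℝ → ℝ}
    (h : ∀ x ∈ spectrum ℝ A, ∀ y ∈ spectrum ℝ B, Integrable (fun t => φ t x y) μ)
    (K : Matrix m n 𝕜) : Integrable (fun t => spectralForm (φ t) A B K) μ := by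
  unfold spectralForm
  split_ifs with hAB
  · exact integrable_finsetSum _ fun i _ => integrable_finsetSum _ fun j _ =>
      (h _ (hAB.1.eigenvalues_mem_spectrum_real i) _
        (hAB.2.eigenvalues_mem_spectrum_real j)).mul_const _
  · exact integrable_zero _ _ _

theorem spectralForm_integral {X : Type*} {mX : MeasurableSpace X} {μ : Measure X}
    {φ : X → ℝ → ℝ → ℝ}
    (h : ∀ x ∈ spectrum ℝ A, ∀ y ∈ spectrum ℝ B, Integrable (fun t => φ t x y) μ)
    (K : Matrix m n 𝕜) :
    spectralForm (fun x y => ∫ t, φ t x y ∂μ) A B K = ∫ t, spectralForm (φ t) A B K ∂μ := by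
  unfold spectralForm
  split_ifs with hAB
  · have hij (i : m) (j : n) := (h _ (hAB.1.eigenvalues_mem_spectrum_real i) _
      (hAB.2.eigenvalues_mem_spectrum_real j)).mul_const (‖eigenCoeff hAB.1 hAB.2 K i j‖ ^ 2)
    rw [integral_finsetSum _ fun i _ => integrable_finsetSum _ fun j _ => hij i j]
    simp only [integral_finsetSum _ fun j _ => hij _ j, integral_mul_const]
  · rw [integral_zero]

end SpectralForm

section ParallelSum

open MeasureTheory Set

variable {A : Matrix m m 𝕜} {B : Matrix n n 𝕜}

/-- The parallel sum `x : y = (x⁻¹ + y⁻¹)⁻¹` of nonnegative reals, written so that it vanishes when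
`x = 0` or `y = 0`. -/
def parallelSum (x y : ℝ) : ℝ := x * y / (x + y)

theorem parallelSum_mul_sq_norm_le {E : Type*} [SeminormedAddCommGroup E] {x y : ℝ} (hx : 0 ≤ x)
    (hy : 0 ≤ y) (v w : E) :
    parallelSum x y * ‖v‖ ^ 2 ≤ x * ‖w‖ ^ 2 + y * ‖v - w‖ ^ 2 := by
  have htri : ‖v‖ ≤ ‖w‖ + ‖v - w‖ := norm_le_insert' v w
  have hpar : 0 ≤ parallelSum x y := div_nonneg (mul_nonneg hx hy) (add_nonneg hx hy)
  calc parallelSum x y * ‖v‖ ^ 2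
    _ ≤ parallelSum x y * (‖w‖ + ‖v - w‖) ^ 2 := by gcongr
    _ ≤ x * ‖w‖ ^ 2 + y * ‖v - w‖ ^ 2 := by
      rcases (add_nonneg hx hy).eq_or_lt' with h0 | hpos
      · simp only [parallelSum, h0, div_zero, zero_mul]
        positivity
      · rw [parallelSum, div_mul_eq_mul_div, div_le_iff₀ hpos]
        linarith [sq_nonneg (x * ‖w‖ - y * ‖v - w‖)]

theorem exists_eq_parallelSum_mul_sq_norm {E : Type*} [SeminormedAddCommGroup E] [NormedSpace ℝ E]
    {x y : ℝ} (hx : 0 ≤ x) (hy : 0 ≤ y) (v : E) :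
    ∃ w : E, x * ‖w‖ ^ 2 + y * ‖v - w‖ ^ 2 = parallelSum x y * ‖v‖ ^ 2 := by
  set c := y / (x + y) with hc
  refine ⟨c • v, ?_⟩
  have hsub : v - c • v = (1 - c) • v := by rw [sub_smul, one_smul]
  rw [hsub, norm_smul, norm_smul, mul_pow, mul_pow, Real.norm_eq_abs, Real.norm_eq_abs, sq_abs,
    sq_abs, ← mul_assoc, ← mul_assoc, ← add_mul, hc, parallelSum]
  congr 1
  rcases (add_nonneg hx hy).eq_or_lt' with h0 | hpos
  · obtain ⟨rfl, rfl⟩ := (add_eq_zero_iff_of_nonneg hx hy).1 h0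
    simp
  · field_simp
    ring

theorem reTrace_conjTranspose_mul_mul (hA : A.IsHermitian) (hB : B.IsHermitian)
    (W : Matrix m n 𝕜) :
    reTrace (Wᴴ * A * W) = ∑ i, ∑ j, hA.eigenvalues i * ‖eigenCoeff hA hB W i j‖ ^ 2 := by
  have h := reTrace_conjTranspose_mul_cfc_mul_cfc hA hB (fun x => x) (fun _ => 1) W
  rw [cfc_id' ℝ A hA.isSelfAdjoint, cfc_const_one ℝ B hB.isSelfAdjoint, Matrix.mul_one,
    spectralForm_eq_sum hA hB] at h
  simpa only [mul_one] using h

theorem reTrace_conjTranspose_mul_self_mul (hA : A.IsHermitian) (hB : B.IsHermitian)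
    (W : Matrix m n 𝕜) :
    reTrace (Wᴴ * W * B) = ∑ i, ∑ j, hB.eigenvalues j * ‖eigenCoeff hA hB W i j‖ ^ 2 := by
  have h := reTrace_conjTranspose_mul_cfc_mul_cfc hA hB (fun _ => 1) (fun y => y) W
  rw [cfc_id' ℝ B hB.isSelfAdjoint, cfc_const_one ℝ A hA.isSelfAdjoint, Matrix.mul_one,
    spectralForm_eq_sum hA hB] at h
  simpa only [one_mul] using h

theorem spectralForm_parallelSum_le (hA : A.PosSemidef) (hB : B.PosSemidef) {t : ℝ} (ht : 0 ≤ t)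
    (K W : Matrix m n 𝕜) :
    spectralForm (fun x y => parallelSum x (t * y)) A B K ≤
      reTrace (Wᴴ * A * W) + t * reTrace ((K - W)ᴴ * (K - W) * B) := by
  simp only [spectralForm_eq_sum hA.1 hB.1, reTrace_conjTranspose_mul_mul hA.1 hB.1,
    reTrace_conjTranspose_mul_self_mul hA.1 hB.1, eigenCoeff_sub, Finset.mul_sum,
    ← Finset.sum_add_distrib, ← mul_assoc]
  gcongr with i _ j _
  exact parallelSum_mul_sq_norm_le (hA.eigenvalues_nonneg i)
    (mul_nonneg ht (hB.eigenvalues_nonneg j)) _ _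

theorem exists_eq_spectralForm_parallelSum (hA : A.PosSemidef) (hB : B.PosSemidef) {t : ℝ}
    (ht : 0 ≤ t) (K : Matrix m n 𝕜) :
    ∃ W : Matrix m n 𝕜, reTrace (Wᴴ * A * W) + t * reTrace ((K - W)ᴴ * (K - W) * B) =
      spectralForm (fun x y => parallelSum x (t * y)) A B K := by
  choose w hw using fun i j => exists_eq_parallelSum_mul_sq_norm (hA.eigenvalues_nonneg i)
    (mul_nonneg ht (hB.eigenvalues_nonneg j)) (eigenCoeff hA.1 hB.1 K i j)
  obtain ⟨W, hW⟩ := eigenCoeff_surjective hA.1 hB.1 (Matrix.of w)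
  refine ⟨W, ?_⟩
  simp only [spectralForm_eq_sum hA.1 hB.1, reTrace_conjTranspose_mul_mul hA.1 hB.1,
    reTrace_conjTranspose_mul_self_mul hA.1 hB.1, eigenCoeff_sub, Finset.mul_sum,
    ← Finset.sum_add_distrib, ← mul_assoc, ← hw, hW, Matrix.sub_apply, Matrix.of_apply]

theorem concaveOn_spectralForm_parallelSum {t : ℝ} (ht : 0 ≤ t) (K : Matrix m n 𝕜) :
    ConcaveOn ℝ ({A : Matrix m m 𝕜 | A.PosSemidef} ×ˢ {B : Matrix n n 𝕜 | B.PosSemidef})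
      (fun P => spectralForm (fun x y => parallelSum x (t * y)) P.1 P.2 K) := by
  refine concaveOn_of_exists_le_concaveOn convex_posSemidef_prod_posSemidef fun P hP => ?_
  obtain ⟨W, hW⟩ := exists_eq_spectralForm_parallelSum hP.1 hP.2 ht K
  refine ⟨_, ⟨convex_posSemidef_prod_posSemidef, fun P _ Q _ a b _ _ _ => le_of_eq ?_⟩, hW,
    fun Q hQ => spectralForm_parallelSum_le hQ.1 hQ.2 ht K W⟩
  simp only [Prod.fst_add, Prod.snd_add, Prod.smul_fst, Prod.smul_snd, Matrix.mul_add,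
    Matrix.add_mul, Matrix.mul_smul, Matrix.smul_mul, map_add, map_smul, smul_eq_mul]
  ring

theorem exists_measure_rpow_mul_rpow_eq_integral_parallelSum {p : ℝ} (hp : p ∈ Ioo (0 : ℝ) 1) :
    ∃ μ : Measure ℝ, ∀ x y : ℝ, 0 ≤ x → 0 ≤ y →
      IntegrableOn (fun t => t ^ (p - 2) * parallelSum x (t * y)) (Ioi 0) μ ∧
        x ^ p * y ^ (1 - p) = ∫ t in Ioi 0, t ^ (p - 2) * parallelSum x (t * y) ∂μ := by
  obtain ⟨μ, hμ⟩ := Real.exists_measure_rpow_eq_integral_rpowIntegrand₀₁ hp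
  refine ⟨μ, fun x y hx hy => ?_⟩
  rcases hy.eq_or_lt' with rfl | hpos
  · simp [parallelSum, Real.zero_rpow (sub_pos.2 hp.2).ne']
  obtain ⟨hint, heq⟩ := hμ (x / y) (div_nonneg hx hy)
  have hscale : EqOn (fun t => y * Real.rpowIntegrand₀₁ p t (x / y))
      (fun t => t ^ (p - 2) * parallelSum x (t * y)) (Ioi 0) := fun t (ht : 0 < t) => by
    have hpow : t ^ (p - 1) = t ^ (p - 2) * t := by
      rw [← Real.rpow_add_one ht.ne']
      ring_nf
    simp only [parallelSum]
    rw [Real.rpowIntegrand₀₁_eq_pow_div hp ht.le (div_nonneg hx hy), hpow]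
    field_simp
    ring
  refine ⟨IntegrableOn.congr_fun (hint.const_mul y) hscale measurableSet_Ioi, ?_⟩
  rw [← setIntegral_congr_fun measurableSet_Ioi hscale, integral_const_mul, ← heq,
    Real.div_rpow hx hy, Real.rpow_sub hpos, Real.rpow_one]
  ring

/-- Lieb's concavity theorem. -/
theorem concaveOn_reTrace_suppRpow_mul_suppRpow {p : ℝ} (hp : p ∈ Ioo (0 : ℝ) 1)
    (K : Matrix m n 𝕜) :
    ConcaveOn ℝ ({A : Matrix m m 𝕜 | A.PosSemidef} ×ˢ {B : Matrix n n 𝕜 | B.PosSemidef})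
      (fun P => reTrace (Kᴴ * suppRpow P.1 p * K * suppRpow P.2 (1 - p))) := by
  obtain ⟨μ, hμ⟩ := exists_measure_rpow_mul_rpow_eq_integral_parallelSum hp
  have hint : ∀ P ∈ {A : Matrix m m 𝕜 | A.PosSemidef} ×ˢ {B : Matrix n n 𝕜 | B.PosSemidef},
      ∀ x ∈ spectrum ℝ P.1, ∀ y ∈ spectrum ℝ P.2,
      IntegrableOn (fun t => t ^ (p - 2) * parallelSum x (t * y)) (Ioi 0) μ :=
    fun P hP x hx y hy => (hμ x y (nonneg_of_mem_spectrum hP.1 hx)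
      (nonneg_of_mem_spectrum hP.2 hy)).1
  have hconc : ConcaveOn ℝ ({A : Matrix m m 𝕜 | A.PosSemidef} ×ˢ {B : Matrix n n 𝕜 | B.PosSemidef})
      fun P => ∫ t in Ioi 0,
        spectralForm (fun x y => t ^ (p - 2) * parallelSum x (t * y)) P.1 P.2 K ∂μ := by
    refine integral_concaveOn_of_integrand_ae convex_posSemidef_prod_posSemidef ?_ fun P hP =>
      integrable_spectralForm (hint P hP) K
    refine ae_restrict_of_forall_mem measurableSet_Ioi fun t (ht : 0 < t) => ?_
    simp only [spectralForm_const_mul]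
    exact (concaveOn_spectralForm_parallelSum ht.le K).smul (Real.rpow_nonneg ht.le _)
  refine hconc.congr fun P hP => ?_
  simp only
  rw [suppRpow_eq_cfc_rpow P.1 hp.1.ne', suppRpow_eq_cfc_rpow P.2 (sub_pos.2 hp.2).ne',
    reTrace_conjTranspose_mul_cfc_mul_cfc hP.1.1 hP.2.1, ← spectralForm_integral (hint P hP)]
  refine spectralForm_congr (fun x hx y hy => ?_) K
  exact ((hμ x y (nonneg_of_mem_spectrum hP.1 hx) (nonneg_of_mem_spectrum hP.2 hy)).2).symm

end ParallelSum

section TraceInequalities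

variable {A B : Matrix n n 𝕜}

theorem reTrace_cfc_mul_cfc_le (hA : A.IsHermitian) (hB : B.IsHermitian) {f g u v : ℝ → ℝ}
    (h : ∀ x ∈ spectrum ℝ A, ∀ y ∈ spectrum ℝ B, f x * g y ≤ u x + v y) :
    reTrace (cfc f A * cfc g B) ≤ reTrace (cfc u A) + reTrace (cfc v B) := by
  have hfg := reTrace_conjTranspose_mul_cfc_mul_cfc hA hB f g 1
  have hu := reTrace_conjTranspose_mul_cfc_mul_cfc hA hB u (fun _ => 1) 1
  have hv := reTrace_conjTranspose_mul_cfc_mul_cfc hA hB (fun _ => 1) v 1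
  simp only [Matrix.conjTranspose_one, one_mul, mul_one, cfc_const_one ℝ A hA.isSelfAdjoint,
    cfc_const_one ℝ B hB.isSelfAdjoint] at hfg hu hv
  rw [hfg, hu, hv, ← spectralForm_add]
  exact spectralForm_mono h 1

theorem reTrace_mul_le_of_holderConjugate (hA : A.PosSemidef) (hB : B.PosSemidef) {p q : ℝ}
    (hpq : p.HolderConjugate q) :
    reTrace (A * B) ≤ p⁻¹ * reTrace (suppRpow A p) + q⁻¹ * reTrace (suppRpow B q) := by
  have hyoung : ∀ x ∈ spectrum ℝ A, ∀ y ∈ spectrum ℝ B,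
      x * y ≤ p⁻¹ • x ^ p + q⁻¹ • y ^ q := fun x hx y hy => by
    simpa only [smul_eq_mul, div_eq_inv_mul] using Real.young_inequality_of_nonneg
      (nonneg_of_mem_spectrum hA hx) (nonneg_of_mem_spectrum hB hy) hpq
  have h := reTrace_cfc_mul_cfc_le (f := fun x => x) (g := fun y => y) hA.1 hB.1 hyoung
  rwa [cfc_id' ℝ A hA.1.isSelfAdjoint, cfc_id' ℝ B hB.1.isSelfAdjoint,
    cfc_smul _ _ A (continuousOn_real_spectrum A _),
    cfc_smul _ _ B (continuousOn_real_spectrum B _), ← suppRpow_eq_cfc_rpow A hpq.ne_zero,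
    ← suppRpow_eq_cfc_rpow B hpq.symm.ne_zero, map_smul, map_smul] at h

theorem mul_reTrace_conjTranspose_mul_mul_le (hA : A.PosSemidef) {α : ℝ} (hα : 1 < α)
    (G : Matrix n n 𝕜) :
    α * reTrace (Gᴴ * A * G) ≤
      reTrace (suppRpow A α) + (α - 1) * reTrace (suppRpow (Gᴴ * G) (α / (α - 1))) := by
  have h := reTrace_mul_le_of_holderConjugate hA (Matrix.posSemidef_self_mul_conjTranspose G)
    (Real.HolderConjugate.conjExponent hα)
  have hswap : reTrace (suppRpow (G * Gᴴ) (α / (α - 1))) =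
      reTrace (suppRpow (Gᴴ * G) (α / (α - 1))) := reTrace_cfc_mul_conjTranspose_self G _
  rw [← Matrix.mul_assoc, reTrace_mul_comm, ← Matrix.mul_assoc, Real.conjExponent, hswap] at h
  calc α * reTrace (Gᴴ * A * G)
    _ ≤ α * (α⁻¹ * reTrace (suppRpow A α) +
        (α / (α - 1))⁻¹ * reTrace (suppRpow (Gᴴ * G) (α / (α - 1)))) := by gcongr
    _ = _ := by field_simp

theorem reTrace_mul_suppRpow_le (hA : A.PosSemidef) (hB : B.PosSemidef) {p : ℝ}
    (hp : p ∈ Set.Ioo (0 : ℝ) 1) :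
    reTrace (A * suppRpow B (1 - p)) ≤
      p * reTrace (suppRpow A p⁻¹) + (1 - p) * reTrace B := by
  have hq : 1 - p ≠ 0 := (sub_pos.2 hp.2).ne'
  have h := reTrace_mul_le_of_holderConjugate hA (posSemidef_suppRpow hB (1 - p))
    (Real.HolderConjugate.inv_one_sub_inv hp.1 hp.2)
  rwa [suppRpow_suppRpow hB, mul_inv_cancel₀ hq, suppRpow_one hB.1, inv_inv, inv_inv] at h

end TraceInequalities

/-- Epstein's concavity theorem. -/
theorem concaveOn_reTrace_suppRpow_inv {p : ℝ} (hp : p ∈ Set.Ioo (0 : ℝ) 1) (K : Matrix m n 𝕜) :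
    ConcaveOn ℝ {A : Matrix m m 𝕜 | A.PosSemidef}
      (fun A => reTrace (suppRpow (Kᴴ * suppRpow A p * K) p⁻¹)) := by
  set N : Matrix m m 𝕜 → Matrix n n 𝕜 := fun A => Kᴴ * suppRpow A p * K
  set f : Matrix m m 𝕜 → ℝ := fun A => reTrace (suppRpow (N A) p⁻¹)
  have hNpos {A : Matrix m m 𝕜} (hA : A.PosSemidef) : (N A).PosSemidef :=
    (posSemidef_suppRpow hA p).conjTranspose_mul_mul_same K
  have hXpos {A : Matrix m m 𝕜} (hA : A.PosSemidef) : (suppRpow (N A) p⁻¹).PosSemidef :=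
    posSemidef_suppRpow (hNpos hA) _
  have heq {A : Matrix m m 𝕜} (hA : A.PosSemidef) :
      reTrace (N A * suppRpow (suppRpow (N A) p⁻¹) (1 - p)) = f A := by
    rw [suppRpow_suppRpow (hNpos hA), mul_suppRpow (hNpos hA), mul_sub, mul_one,
      inv_mul_cancel₀ hp.1.ne', add_sub_cancel]
  refine ⟨convex_setOf_posSemidef, fun A hA B hB a b ha hb hab => ?_⟩
  have hlieb := (concaveOn_reTrace_suppRpow_mul_suppRpow hp K).2 (x := (A, suppRpow (N A) p⁻¹))
    (y := (B, suppRpow (N B) p⁻¹)) ⟨hA, hXpos hA⟩ ⟨hB, hXpos hB⟩ ha hb hab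
  have hyoung := reTrace_mul_suppRpow_le (hNpos (convex_setOf_posSemidef hA hB ha hb hab))
    (convex_setOf_posSemidef (hXpos hA) (hXpos hB) ha hb hab) hp
  have hchain : a • f A + b • f B ≤
      p * f (a • A + b • B) + (1 - p) * (a • f A + b • f B) := by
    rw [map_add, map_smul, map_smul] at hyoung
    calc a • f A + b • f B
      _ = a • reTrace (N A * suppRpow (suppRpow (N A) p⁻¹) (1 - p)) +
          b • reTrace (N B * suppRpow (suppRpow (N B) p⁻¹) (1 - p)) := by rw [heq hA, heq hB]
      _ ≤ _ := hlieb.trans hyoung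
  refine le_of_mul_le_mul_left ?_ hp.1
  linarith

end Matrices

section Sandwiched

variable {n 𝕜 : Type*} [Fintype n] [RCLike 𝕜]

/-- The pairs of positive semidefinite matrices with `supp ρ ⊆ supp σ`, on which the sandwiched
Rényi power is jointly convex. -/
def sandwichedDomain (n 𝕜 : Type*) [Fintype n] [RCLike 𝕜] :
    Set (Matrix n n 𝕜 × Matrix n n 𝕜) :=
  {P | P.1.PosSemidef ∧ P.2.PosSemidef ∧ ∀ v, P.2 *ᵥ v = 0 → P.1 *ᵥ v = 0}

theorem convex_sandwichedDomain : Convex ℝ (sandwichedDomain n 𝕜) := by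
  refine fun P hP Q hQ a b ha hb hab => ⟨convex_setOf_posSemidef hP.1 hQ.1 ha hb hab,
    convex_setOf_posSemidef hP.2.1 hQ.2.1 ha hb hab, fun v hv => ?_⟩
  have hker {c : ℝ} {R : Matrix n n 𝕜 × Matrix n n 𝕜} (hR : R ∈ sandwichedDomain n 𝕜)
      (h : (c • R.2) *ᵥ v = 0) : (c • R.1) *ᵥ v = 0 := by
    rw [Matrix.smul_mulVec, smul_eq_zero] at h ⊢
    exact h.imp_right (hR.2.2 v)
  have hP₂ : (a • P.2).PosSemidef := hP.2.1.smul ha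
  have hQ₂ : (b • Q.2).PosSemidef := hQ.2.1.smul hb
  change (a • P.2 + b • Q.2) *ᵥ v = 0 at hv
  change (a • P.1 + b • Q.1) *ᵥ v = 0
  rw [Matrix.add_mulVec, hker hP (mulVec_eq_zero_of_add_mulVec_eq_zero hP₂ hQ₂ hv),
    hker hQ (mulVec_eq_zero_of_add_mulVec_eq_zero hQ₂ hP₂ (by rwa [add_comm])), add_zero]

variable [DecidableEq n]

/-- The sandwiched Rényi power `tr ((σ ^ (-s) ρ σ ^ (-s)) ^ α)` with `s = (α - 1) / (2 α)`, where
inverses are taken on the support. -/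
def sandwichedTrace (α : ℝ) (P : Matrix n n 𝕜 × Matrix n n 𝕜) : ℝ :=
  reTrace (suppRpow
    (suppRpow P.2 (-(α - 1) / (2 * α)) * P.1 * suppRpow P.2 (-(α - 1) / (2 * α))) α)

/-- The functional of `(ρ, σ)` whose supremum over `K` is the sandwiched Rényi power
(Frank and Lieb). -/
def frankLiebFunctional (α : ℝ) (K : Matrix n n 𝕜) (P : Matrix n n 𝕜 × Matrix n n 𝕜) : ℝ :=
  α * reTrace (Kᴴ * P.1 * K) -
    (α - 1) * reTrace (suppRpow (Kᴴ * suppRpow P.2 ((α - 1) / α) * K) (α / (α - 1)))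

variable {α : ℝ} {P : Matrix n n 𝕜 × Matrix n n 𝕜}

theorem eq_suppRpow_mul_mul_suppRpow (hP : P ∈ sandwichedDomain n 𝕜) (s : ℝ) :
    P.1 = suppRpow P.2 s * (suppRpow P.2 (-s) * P.1 * suppRpow P.2 (-s)) * suppRpow P.2 s := by
  obtain ⟨hρ, hσ, hker⟩ := hP
  have hright : P.1 * suppRpow P.2 0 = P.1 := mul_suppRpow_zero_of_ker_le hσ hker
  have hleft : suppRpow P.2 0 * P.1 = P.1 := by
    simpa only [Matrix.conjTranspose_mul, (isHermitian_suppRpow P.2 0).eq, hρ.1.eq]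
      using congrArg Matrix.conjTranspose hright
  calc P.1
    _ = suppRpow P.2 0 * P.1 * suppRpow P.2 0 := by rw [hleft, hright]
    _ = (suppRpow P.2 s * suppRpow P.2 (-s)) * P.1 *
        (suppRpow P.2 (-s) * suppRpow P.2 s) := by
      rw [suppRpow_mul_suppRpow hσ, suppRpow_mul_suppRpow hσ, add_neg_cancel, neg_add_cancel]
    _ = _ := by simp only [Matrix.mul_assoc]

theorem posSemidef_suppRpow_mul_mul_suppRpow (hP : P ∈ sandwichedDomain n 𝕜) (s : ℝ) :
    (suppRpow P.2 s * P.1 * suppRpow P.2 s).PosSemidef := by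
  have h := hP.1.conjTranspose_mul_mul_same (suppRpow P.2 s)
  rwa [(isHermitian_suppRpow P.2 s).eq] at h

theorem frankLiebFunctional_le_sandwichedTrace (hα : 1 < α) (hP : P ∈ sandwichedDomain n 𝕜)
    (K : Matrix n n 𝕜) : frankLiebFunctional α K P ≤ sandwichedTrace α P := by
  set s := (α - 1) / (2 * α) with hs
  set H := suppRpow P.2 s with hH
  set X := suppRpow P.2 (-s) * P.1 * suppRpow P.2 (-s) with hX
  have hHK : (H * K)ᴴ * X * (H * K) = Kᴴ * P.1 * K := by
    rw [eq_suppRpow_mul_mul_suppRpow hP s, Matrix.conjTranspose_mul, (isHermitian_suppRpow _ s).eq]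
    simp only [Matrix.mul_assoc, hX, hH]
  have hHH : (H * K)ᴴ * (H * K) = Kᴴ * suppRpow P.2 ((α - 1) / α) * K := by
    have hss : s + s = (α - 1) / α := by
      rw [hs]
      field_simp
      ring
    rw [← hss, ← suppRpow_mul_suppRpow hP.2.1, Matrix.conjTranspose_mul,
      (isHermitian_suppRpow _ s).eq]
    simp only [Matrix.mul_assoc, hH]
  have h := mul_reTrace_conjTranspose_mul_mul_le (posSemidef_suppRpow_mul_mul_suppRpow hP (-s)) hα
    (H * K)
  rw [hHK, hHH] at h
  rw [frankLiebFunctional, sandwichedTrace, sub_le_iff_le_add, neg_div]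
  exact h

theorem exists_frankLiebFunctional_eq_sandwichedTrace (hα : 1 < α)
    (hP : P ∈ sandwichedDomain n 𝕜) :
    ∃ K : Matrix n n 𝕜, frankLiebFunctional α K P = sandwichedTrace α P := by
  have hα₁ : α - 1 ≠ 0 := (sub_pos.2 hα).ne'
  set s := (α - 1) / (2 * α) with hs
  set r := (α - 1) / 2 with hr
  set X := suppRpow P.2 (-s) * P.1 * suppRpow P.2 (-s) with hX
  have hXpos : X.PosSemidef := posSemidef_suppRpow_mul_mul_suppRpow hP (-s)
  have hcross : (suppRpow P.2 (-s) * suppRpow X r)ᴴ * P.1 * (suppRpow P.2 (-s) * suppRpow X r) =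
      suppRpow X α := by
    have hexp : r + (1 + r) = α := by rw [hr]; ring
    calc _ = suppRpow X r * (X * suppRpow X r) := by
          rw [Matrix.conjTranspose_mul, (isHermitian_suppRpow X r).eq,
            (isHermitian_suppRpow P.2 (-s)).eq]
          simp only [hX, Matrix.mul_assoc]
      _ = suppRpow X α := by
          rw [mul_suppRpow hXpos, suppRpow_mul_suppRpow hXpos, hexp]
  have hsquare : (suppRpow P.2 (-s) * suppRpow X r)ᴴ * suppRpow P.2 ((α - 1) / α) *
      (suppRpow P.2 (-s) * suppRpow X r) = suppRpow X (α - 1) := by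
    have hexp : -s + (α - 1) / α + -s = 0 := by
      rw [hs]
      field_simp
      ring
    have hsupp : suppRpow P.2 0 * X = X := by
      simp only [hX, ← Matrix.mul_assoc, suppRpow_mul_suppRpow hP.2.1, zero_add]
    calc _ = suppRpow X r * (suppRpow P.2 0 * suppRpow X r) := by
          rw [Matrix.conjTranspose_mul, (isHermitian_suppRpow X r).eq,
            (isHermitian_suppRpow P.2 (-s)).eq, ← hexp, ← suppRpow_mul_suppRpow hP.2.1,
            ← suppRpow_mul_suppRpow hP.2.1]
          simp only [Matrix.mul_assoc]
      _ = suppRpow X (α - 1) := by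
          rw [mul_suppRpow_eq_self hXpos hsupp, suppRpow_mul_suppRpow hXpos, hr, add_halves]
  refine ⟨suppRpow P.2 (-s) * suppRpow X r, ?_⟩
  rw [frankLiebFunctional, hcross, hsquare, suppRpow_suppRpow hXpos, mul_div_cancel₀ _ hα₁,
    sandwichedTrace, neg_div]
  ring

theorem convexOn_frankLiebFunctional (hα : 1 < α) (K : Matrix n n 𝕜) :
    ConvexOn ℝ (sandwichedDomain n 𝕜) (frankLiebFunctional α K) := by
  have hpos : 0 < α - 1 := sub_pos.2 hα
  have hp : (α - 1) / α ∈ Set.Ioo (0 : ℝ) 1 :=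
    ⟨by positivity, (div_lt_one (by positivity)).2 (sub_one_lt α)⟩
  have hlinear : ConvexOn ℝ (sandwichedDomain n 𝕜) fun P => α * reTrace (Kᴴ * P.1 * K) := by
    refine ⟨convex_sandwichedDomain, fun P _ Q _ a b _ _ _ => le_of_eq ?_⟩
    simp only [Prod.fst_add, Prod.smul_fst, Matrix.mul_add, Matrix.add_mul, Matrix.mul_smul,
      Matrix.smul_mul, map_add, map_smul, smul_eq_mul]
    ring
  have hepstein : ConcaveOn ℝ (sandwichedDomain n 𝕜) fun P =>
      reTrace (suppRpow (Kᴴ * suppRpow P.2 ((α - 1) / α) * K) ((α - 1) / α)⁻¹) :=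
    ((concaveOn_reTrace_suppRpow_inv hp K).comp_linearMap (LinearMap.snd ℝ _ _)).subset
      (fun _ hP => hP.2.1) convex_sandwichedDomain
  rw [inv_div] at hepstein
  exact hlinear.sub (hepstein.smul hpos.le)

theorem convexOn_sandwichedTrace (hα : 1 < α) :
    ConvexOn ℝ (sandwichedDomain n 𝕜) (sandwichedTrace α) := by
  refine convexOn_of_exists_convexOn_le convex_sandwichedDomain fun P hP => ?_
  obtain ⟨K, hK⟩ := exists_frankLiebFunctional_eq_sandwichedTrace hα hP
  exact ⟨frankLiebFunctional α K, convexOn_frankLiebFunctional hα K, hK,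
    fun Q hQ => frankLiebFunctional_le_sandwichedTrace hα hQ K⟩

end Sandwiched

theorem mem_sandwichedDomain_sum {n 𝕜 C : Type*} [Fintype n] [RCLike 𝕜] [Fintype C]
    {ρ : C → Matrix n n 𝕜} (hρ : ∀ c, (ρ c).PosSemidef) (c : C) :
    (ρ c, ∑ c, ρ c) ∈ sandwichedDomain n 𝕜 := by
  have hrest : (∑ c' ∈ Finset.univ.erase c, ρ c').PosSemidef :=
    Matrix.posSemidef_sum _ fun c' _ => hρ c'
  refine ⟨hρ c, Matrix.posSemidef_sum _ fun c' _ => hρ c', fun v hv => ?_⟩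
  rw [← Finset.add_sum_erase _ _ (Finset.mem_univ c)] at hv
  exact mulVec_eq_zero_of_add_mulVec_eq_zero (hρ c) hrest hv

theorem stmt14_general {n 𝕜 C Z ι : Type*} [Fintype n] [DecidableEq n] [RCLike 𝕜] [Fintype C]
    [Fintype Z] [Fintype ι] {α : ℝ} (hα : 1 < α) {F : C × Z → ℝ} (hF : ∀ p, 0 ≤ F p)
    {ρ : ι → C × Z → Matrix n n 𝕜} (hρ : ∀ i p, (ρ i p).PosSemidef) {w : ι → ℝ}
    (hw : ∀ i, 0 ≤ w i) (hsum : ∑ i, w i = 1)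
    (hqef : ∀ i, ∑ p, F p * sandwichedTrace α (ρ i p, ∑ c, ρ i (c, p.2)) ≤
      reTrace (∑ p, ρ i p)) :
    ∑ p, F p * sandwichedTrace α (∑ i, w i • ρ i p, ∑ c, ∑ i, w i • ρ i (c, p.2)) ≤
      reTrace (∑ p, ∑ i, w i • ρ i p) := by
  have hconv (p : C × Z) :
      sandwichedTrace α (∑ i, w i • ρ i p, ∑ c, ∑ i, w i • ρ i (c, p.2)) ≤
        ∑ i, w i * sandwichedTrace α (ρ i p, ∑ c, ρ i (c, p.2)) := by
    have hcomm : (∑ i, w i • ρ i p, ∑ c, ∑ i, w i • ρ i (c, p.2)) =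
        ∑ i, w i • (ρ i p, ∑ c, ρ i (c, p.2)) := by
      simp only [Prod.smul_mk, Finset.smul_sum, ← prod_mk_sum]
      rw [Finset.sum_comm]
    rw [hcomm]
    exact (convexOn_sandwichedTrace hα).map_sum_le (t := Finset.univ)
      (p := fun i => (ρ i p, ∑ c, ρ i (c, p.2))) (fun i _ => hw i) hsum
      fun i _ => mem_sandwichedDomain_sum (ρ := fun c => ρ i (c, p.2)) (fun c => hρ i (c, p.2)) p.1
  calc ∑ p, F p * sandwichedTrace α (∑ i, w i • ρ i p, ∑ c, ∑ i, w i • ρ i (c, p.2))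
    _ ≤ ∑ p, F p * ∑ i, w i * sandwichedTrace α (ρ i p, ∑ c, ρ i (c, p.2)) := by
      gcongr with p _
      exacts [hF p, hconv p]
    _ = ∑ i, w i * ∑ p, F p * sandwichedTrace α (ρ i p, ∑ c, ρ i (c, p.2)) := by
      simp only [Finset.mul_sum, mul_left_comm (w _)]
      exact Finset.sum_comm
    _ ≤ ∑ i, w i * reTrace (∑ p, ρ i p) := by
      gcongr with i _
      exacts [hw i, hqef i]
    _ = reTrace (∑ p, ∑ i, w i • ρ i p) := by
      rw [Finset.sum_comm]
      simp only [map_sum, map_smul, smul_eq_mul, Finset.mul_sum]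

theorem mpow_eq_suppRpow {d : ℕ} (A : Matrix (Fin d) (Fin d) ℂ) (p : ℝ) :
    mpow A p = suppRpow A p := by
  rw [mpow, mfun, suppRpow]
  split_ifs with hA
  · exact (hA.cfc_eq _).symm
  · exact (cfc_apply_of_not_predicate A hA).symm

theorem sandR_eq_sandwichedTrace {d : ℕ} (α : ℝ) (ρ σ : Matrix (Fin d) (Fin d) ℂ) :
    sandR α ρ σ = sandwichedTrace α (ρ, σ) := by
  simp only [sandR, mpow_eq_suppRpow]
  rfl

/-- The QEF inequality is preserved under convex combinations of states, as a
consequence of joint convexity of the sandwiched Rényi power. -/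
theorem stmt14 {d : ℕ} {C Z ι : Type*} [Fintype C] [Fintype Z] [Fintype ι]
    (α : ℝ) (hα : 1 < α)
    (F : C × Z → ℝ) (hF : ∀ p, 0 ≤ F p)
    (ρ : ι → (C × Z) → Matrix (Fin d) (Fin d) ℂ)
    (hρ : ∀ i p, (ρ i p).PosSemidef)
    (lam : ι → ℝ) (hlam : ∀ i, 0 ≤ lam i) (hsum : ∑ i, lam i = 1)
    (hqef : ∀ i, ∑ p, F p * sandR α (ρ i p) (∑ c, ρ i (c, p.2)) ≤ rtr (∑ p, ρ i p)) :
    ∑ p, F p * sandR α (∑ i, ((lam i : ℝ) : ℂ) • ρ i p)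
        (∑ c, ∑ i, ((lam i : ℝ) : ℂ) • ρ i (c, p.2))
      ≤ rtr (∑ p, ∑ i, ((lam i : ℝ) : ℂ) • ρ i p) := by
  simp only [sandR_eq_sandwichedTrace, Complex.coe_smul] at hqef ⊢
  exact stmt14_general hα hF hρ hlam hsum hqef
end
end
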